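/- Let P be an IDP Gorenstein polytope of dimension d and degree s. If d > 2s, then P is reducible. -/

import Mathlib

open Pointwise

/-- A point of `ℝ^d` is a lattice point if all its coordinates are integers. -/
def IsLatticePt {d : ℕ} (x : Fin d → ℝ) : Prop := ∀ i, ∃ z : ℤ, x i = (z : ℝ)

/-- A lattice polytope is the (non-empty) convex hull of finitely many lattice points. -/
def IsLatticePolytope {d : ℕ} (P : Set (Fin d → ℝ)) : Prop :=
  ∃ V : Finset (Fin d → ℝ), V.Nonempty ∧ (∀ v ∈ V, IsLatticePt v) ∧
    P = convexHull ℝ (V : Set (Fin d → ℝ))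

/-- The dimension of a polytope: the dimension of the direction of its affine hull. -/
noncomputable def polyDim {d : ℕ} (P : Set (Fin d → ℝ)) : ℕ :=
  Module.finrank ℝ (affineSpan ℝ P).direction

/-- A polytope is hollow if its relative interior contains no lattice point. -/
def IsHollow {d : ℕ} (P : Set (Fin d → ℝ)) : Prop :=
  ∀ x ∈ intrinsicInterior ℝ P, ¬ IsLatticePt x

/-- A facet of `P`: a non-empty exposed face of dimension `dim P - 1`. -/
def IsFacet {d : ℕ} (P F : Set (Fin d → ℝ)) : Prop :=
  IsExposed ℝ P F ∧ F.Nonempty ∧ polyDim F + 1 = polyDim P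

/-- An affine functional is integral on `P` if it takes integer values on all
lattice points of the affine hull of `P`. -/
def IsIntegralOn {d : ℕ} (P : Set (Fin d → ℝ)) (u : (Fin d → ℝ) →ᵃ[ℝ] ℝ) : Prop :=
  ∀ y ∈ affineSpan ℝ P, IsLatticePt y → ∃ z : ℤ, u y = (z : ℝ)

/-- `P` is reflexive: there is a lattice point `x` in the relative interior of `P`
such that every facet of `P` has lattice distance one from `x`, i.e. for every facet `F`
there is an integral affine functional that is constant on `F` and exceeds its value
at `x` by exactly `1`. -/
def IsReflexivePolytope {d : ℕ} (P : Set (Fin d → ℝ)) : Prop :=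
  ∃ x ∈ intrinsicInterior ℝ P, IsLatticePt x ∧
    ∀ F : Set (Fin d → ℝ), IsFacet P F →
      ∃ u : (Fin d → ℝ) →ᵃ[ℝ] ℝ, IsIntegralOn P u ∧ ∀ f ∈ F, u f = u x + 1

/-- `P` is Gorenstein if some positive integer multiple `r • P` is reflexive. -/
def IsGorenstein {d : ℕ} (P : Set (Fin d → ℝ)) : Prop :=
  ∃ r : ℕ, 0 < r ∧ IsReflexivePolytope ((r : ℝ) • P)

/-- `P` is Gorenstein of codegree `r` if `r • P` is reflexive (`r` positive). -/
def IsGorensteinOfCodeg {d : ℕ} (P : Set (Fin d → ℝ)) (r : ℕ) : Prop :=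
  0 < r ∧ IsReflexivePolytope ((r : ℝ) • P)

/-- The codegree of `P`: the smallest positive integer `r` such that `r • P` is not hollow. -/
noncomputable def polyCodeg {d : ℕ} (P : Set (Fin d → ℝ)) : ℕ :=
  sInf {r : ℕ | 0 < r ∧ ¬ IsHollow ((r : ℝ) • P)}

/-- The degree of `P`: `dim P + 1 - codeg P`. -/
noncomputable def polyDeg {d : ℕ} (P : Set (Fin d → ℝ)) : ℕ :=
  polyDim P + 1 - polyCodeg P

/-- Unimodular equivalence of lattice polytopes: an affine map carrying `P` onto `Q`,
with an affine inverse on affine hulls, such that both maps preserve lattice points of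
the affine hulls. -/
def LatticeIso {d e : ℕ} (P : Set (Fin d → ℝ)) (Q : Set (Fin e → ℝ)) : Prop :=
  ∃ (f : (Fin d → ℝ) →ᵃ[ℝ] (Fin e → ℝ)) (g : (Fin e → ℝ) →ᵃ[ℝ] (Fin d → ℝ)),
    f '' P = Q ∧ g '' Q = P ∧
    (∀ x ∈ affineSpan ℝ P, g (f x) = x) ∧ (∀ y ∈ affineSpan ℝ Q, f (g y) = y) ∧
    (∀ x ∈ affineSpan ℝ P, IsLatticePt x → IsLatticePt (f x)) ∧
    (∀ y ∈ affineSpan ℝ Q, IsLatticePt y → IsLatticePt (g y))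

/-- The lattice pyramid `conv(P' × {0}, (0,1))` over `P' ⊆ ℝ^m`. -/
def pyramidOver {m : ℕ} (P' : Set (Fin m → ℝ)) : Set (Fin (m + 1) → ℝ) :=
  convexHull ℝ ((fun x => Fin.snoc x (0 : ℝ)) '' P' ∪ {Fin.snoc (0 : Fin m → ℝ) (1 : ℝ)})

/-- `P` is a lattice pyramid if it is a single lattice point or is isomorphic to a
lattice pyramid over a lattice polytope. -/
def IsLatticePyramid {d : ℕ} (P : Set (Fin d → ℝ)) : Prop :=
  (∃ x : Fin d → ℝ, IsLatticePt x ∧ P = {x}) ∨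
  ∃ (m : ℕ) (P' : Set (Fin m → ℝ)), IsLatticePolytope P' ∧ LatticeIso P (pyramidOver P')

/-- The Cayley polytope `P_1 * ⋯ * P_l ⊆ ℝ^{n+l}` of `P_1, …, P_l ⊆ ℝ^n`:
the convex hull of the sets `P_i × {e_i}`. -/
def cayley {n l : ℕ} (P : Fin l → Set (Fin n → ℝ)) : Set (Fin (n + l) → ℝ) :=
  convexHull ℝ (⋃ i : Fin l, (fun x => Fin.append x (Pi.single i (1 : ℝ))) '' P i)

/-- The Cayley polytope `F * G ⊆ ℝ^{n+2}` of two polytopes `F, G ⊆ ℝ^n`. -/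
def cayleyTwo {n : ℕ} (F G : Set (Fin n → ℝ)) : Set (Fin (n + 2) → ℝ) :=
  convexHull ℝ
    ((fun x => Fin.append x ![(1 : ℝ), 0]) '' F ∪ (fun x => Fin.append x ![(0 : ℝ), 1]) '' G)

/-- `P` is a Cayley join of `F` and `G` if `P ≅ F * G` and `dim F + dim G = dim P - 1`. -/
def IsCayleyJoin {d n : ℕ} (P : Set (Fin d → ℝ)) (F G : Set (Fin n → ℝ)) : Prop :=
  LatticeIso P (cayleyTwo F G) ∧ polyDim F + polyDim G + 1 = polyDim P

/-- `P` is reducible with factors `F` and `G`: a Cayley join with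
`codeg F + codeg G = codeg P`. -/
def IsReducibleWith {d n : ℕ} (P : Set (Fin d → ℝ)) (F G : Set (Fin n → ℝ)) : Prop :=
  IsCayleyJoin P F G ∧ polyCodeg F + polyCodeg G = polyCodeg P

/-- `P` is reducible: it is a single lattice point (by convention) or is reducible
with some factors `F` and `G` which are lattice polytopes. -/
def IsReducible {d : ℕ} (P : Set (Fin d → ℝ)) : Prop :=
  (∃ x : Fin d → ℝ, IsLatticePt x ∧ P = {x}) ∨
  ∃ (n : ℕ) (F G : Set (Fin n → ℝ)), IsLatticePolytope F ∧ IsLatticePolytope G ∧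
    IsReducibleWith P F G

/-- `P` is a Cayley polytope: a single lattice point, or isomorphic to a Cayley polytope
of `l > 1` lattice polytopes. -/
def IsCayleyPolytope {d : ℕ} (P : Set (Fin d → ℝ)) : Prop :=
  (∃ x : Fin d → ℝ, IsLatticePt x ∧ P = {x}) ∨
  ∃ (n l : ℕ) (Q : Fin l → Set (Fin n → ℝ)), 1 < l ∧ (∀ i, IsLatticePolytope (Q i)) ∧
    LatticeIso P (cayley Q)

/-- `P` is IDP if for every `k ≥ 2` every lattice point of `k • P` is a sum of `k`
lattice points of `P`. -/
def IsIDP {d : ℕ} (P : Set (Fin d → ℝ)) : Prop :=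
  ∀ k : ℕ, 2 ≤ k → ∀ x : Fin d → ℝ, IsLatticePt x → x ∈ (k : ℝ) • P →
    ∃ p : Fin k → (Fin d → ℝ), (∀ i, p i ∈ P ∧ IsLatticePt (p i)) ∧ x = ∑ i, p i

/-- The standard simplex `Δ_s = conv(0, e_1, …, e_s) ⊆ ℝ^s`. -/
def stdSimplexLP (s : ℕ) : Set (Fin s → ℝ) :=
  convexHull ℝ (insert 0 (Set.range fun i : Fin s => Pi.single i (1 : ℝ)))

/-- The product of `F ⊆ ℝ^m` and `G ⊆ ℝ^n` inside `ℝ^{m+n}`. -/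
def prodPoly {m n : ℕ} (F : Set (Fin m → ℝ)) (G : Set (Fin n → ℝ)) : Set (Fin (m + n) → ℝ) :=
  (fun p : (Fin m → ℝ) × (Fin n → ℝ) => Fin.append p.1 p.2) '' (F ×ˢ G)

/-- The free join `conv(F × 0 × {0} ∪ 0 × G × {1}) ⊆ ℝ^m × ℝ^n × ℝ`. -/
def freeJoin {m n : ℕ} (F : Set (Fin m → ℝ)) (G : Set (Fin n → ℝ)) :
    Set (Fin (m + n + 1) → ℝ) :=
  convexHull ℝ
    ((fun x => Fin.snoc (Fin.append x (0 : Fin n → ℝ)) (0 : ℝ)) '' F ∪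
     (fun y => Fin.snoc (Fin.append (0 : Fin m → ℝ) y) (1 : ℝ)) '' G)

/-!
Let `r` be the codegree of `P`. Reflexivity of `r • P` presents `P` by integral inequalities
`0 ≤ u k`, one per facet, with positive weights `c k` such that `∑ k, c k * u k = 1` on `P`. By IDP
the interior lattice point of `r • P` is a sum of `r` lattice points `p i` of `P`; each `u k`
equals `1` at exactly one of them, `p (κ k)`, and `0` at the others.

The equation `∑ k, c k • u k = 1` lives in a space of dimension `dim P + 1`, and by Carathéodory
its weights may be chosen with linearly independent support. Since `d > 2s` means
`dim P + 3 ≤ 2 * r`, a dimension count yields a proper nonempty set `I` of vertices off which the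
weights are `0` or `1`, so that `ℓ = ∑ k with κ k ∉ I, c' k * u k` is an integral functional with
values in `[0, 1]` on `P`. Hence `P` is the Cayley polytope of its faces at `ℓ = 0` and `ℓ = 1`.
By the choice of `I`, the latter is the face where every `u k` with `κ k ∈ I` vanishes. Reflecting
through the barycenter of the `p i` shows that the former is the complementary face, so the
directions of the two faces are independent. Both faces inherit such a presentation, which reads
off their codegrees as `I.card` and `Iᶜ.card`.
-/

section ConicCombinations

variable {Φ M : Type*} [Fintype Φ] [AddCommGroup M] [Module ℝ M] {g : Φ → M} {c : Φ → ℝ}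

theorem exists_relation_of_not_linearIndepOn_support
    (h : ¬ LinearIndepOn ℝ g (Function.support c)) :
    ∃ b : Φ → ℝ, Function.support b ⊆ Function.support c ∧ ∑ k, b k • g k = 0 ∧ ∃ k, 0 < b k := by
  obtain ⟨f, hfs, hf, hf0⟩ := linearDepOn_iff'.1 h
  have hsupp : Function.support f ⊆ Function.support c := by
    simpa only [Finsupp.mem_supported, Finsupp.fun_support_eq] using hfs
  rw [Finsupp.linearCombination_apply, Finsupp.sum_fintype _ _ fun k => zero_smul ℝ (g k)] at hf
  obtain ⟨k, hk⟩ := Finsupp.ne_iff.1 hf0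
  rcases lt_or_gt_of_ne hk with hneg | hpos
  · refine ⟨-f, by simpa only [Finsupp.coe_neg, Function.support_neg] using hsupp, ?_, k, ?_⟩
    · simpa only [Pi.neg_apply, neg_smul, Finset.sum_neg_distrib, neg_eq_zero] using hf
    · simpa using hneg
  · exact ⟨f, hsupp, hf, k, hpos⟩

theorem exists_nonneg_sub_smul_support_ssubset {Φ : Type*} [Finite Φ] {b c : Φ → ℝ} (hc : 0 ≤ c)
    (hb : Function.support b ⊆ Function.support c) (hpos : ∃ k, 0 < b k) :
    ∃ t : ℝ, 0 ≤ c - t • b ∧ Function.support (c - t • b) ⊂ Function.support c := by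
  classical
  have := Fintype.ofFinite Φ
  obtain ⟨k₀, hk₀, hmin⟩ := Finset.exists_min_image {k | 0 < b k} (fun k => c k / b k)
    (by simpa [Finset.Nonempty] using hpos)
  replace hk₀ : 0 < b k₀ := by simpa using hk₀
  refine ⟨c k₀ / b k₀, fun k => ?_, Set.ssubset_iff_exists.2 ⟨fun k hk hck => hk ?_, k₀,
    hb hk₀.ne', ?_⟩⟩
  · rcases lt_or_ge 0 (b k) with hk | hk
    · have : c k₀ / b k₀ * b k ≤ c k := (le_div_iff₀ hk).1 (hmin k (by simpa using hk))
      simpa using this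
    · have : c k₀ / b k₀ * b k ≤ 0 :=
        mul_nonpos_of_nonneg_of_nonpos (div_nonneg (hc k₀) hk₀.le) hk
      simpa using this.trans (hc k)
  · have : b k = 0 := by_contra fun h => hb h hck
    simp [hck, this]
  · simp [hk₀.ne']

theorem exists_nonneg_linearIndepOn_support (g : Φ → M) (hc : 0 ≤ c) :
    ∃ c' : Φ → ℝ, 0 ≤ c' ∧ ∑ k, c' k • g k = ∑ k, c k • g k ∧
      LinearIndepOn ℝ g (Function.support c') := by
  induction hs : Function.support c using WellFoundedLT.induction generalizing c with
  | ind s ih =>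
    subst hs
    by_cases hli : LinearIndepOn ℝ g (Function.support c)
    · exact ⟨c, hc, rfl, hli⟩
    · obtain ⟨b, hbc, hb, hpos⟩ := exists_relation_of_not_linearIndepOn_support hli
      obtain ⟨t, ht, hlt⟩ := exists_nonneg_sub_smul_support_ssubset hc hbc hpos
      obtain ⟨c', hc', hsum, hli'⟩ := ih _ hlt ht rfl
      refine ⟨c', hc', hsum.trans ?_, hli'⟩
      simp only [Pi.sub_apply, Pi.smul_apply, smul_eq_mul, sub_smul, mul_smul,
        Finset.sum_sub_distrib, ← Finset.smul_sum, hb, smul_zero, sub_zero]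

theorem finrank_quotient_span_image_add_ncard [FiniteDimensional ℝ M] {Ψ : Type*} {f : Ψ → M}
    {s : Set Ψ} (hs : LinearIndepOn ℝ f s) :
    Module.finrank ℝ (M ⧸ Submodule.span ℝ (f '' s)) + s.ncard = Module.finrank ℝ M := by
  have : Finite s := LinearIndependent.finite hs
  have : Fintype s := .ofFinite s
  have hspan : Module.finrank ℝ (Submodule.span ℝ (f '' s)) = s.ncard := by
    rw [Set.image_eq_range, finrank_span_eq_card hs, ← Nat.card_eq_fintype_card,
      Nat.card_coe_set_eq]
  rw [← hspan, Submodule.finrank_quotient_add_finrank]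

theorem exists_nonneg_linearIndepOn_support_add_smul_eq_zero {a : Φ → ℝ} (ha : ∀ k, 0 < a k)
    (hsum : ∑ k, a k • g k = 0) {k₀ : Φ} (hk₀ : g k₀ ≠ 0) :
    ∃ c : Φ → ℝ, 0 ≤ c ∧ a k₀ • g k₀ + ∑ k, c k • g k = 0 ∧ (Function.support c).Nonempty ∧
      LinearIndepOn ℝ g (Function.support c) := by
  classical
  obtain ⟨c, hc, hsum', hli⟩ := exists_nonneg_linearIndepOn_support g
    (c := Function.update a k₀ 0) fun k => by
      rcases eq_or_ne k k₀ with rfl | hk <;> simp [*, (ha _).le]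
  have hrel : a k₀ • g k₀ + ∑ k, c k • g k = 0 := by
    rw [hsum', ← hsum, ← Finset.add_sum_erase _ _ (Finset.mem_univ k₀),
      ← Finset.add_sum_erase _ (fun k => a k • g k) (Finset.mem_univ k₀)]
    simp only [Function.update_self, zero_smul, zero_add]
    congr 1
    refine Finset.sum_congr rfl fun k hk => ?_
    rw [Function.update_of_ne (Finset.ne_of_mem_erase hk)]
  refine ⟨c, hc, hrel, Set.nonempty_iff_ne_empty.2 fun hempty => ?_, hli⟩
  rw [Function.support_eq_empty_iff] at hempty
  subst hempty
  simp [(ha k₀).ne', hk₀] at hrel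

theorem span_image_support_le_ker (hc : 0 ≤ c) {φ : Module.Dual ℝ M}
    (hφ : ∀ k ∈ Function.support c, 0 ≤ φ (g k)) (hsum : φ (∑ k, c k • g k) ≤ 0) :
    Submodule.span ℝ (g '' Function.support c) ≤ LinearMap.ker φ := by
  have hterm : ∀ k ∈ Finset.univ, 0 ≤ c k * φ (g k) := fun k _ => by
    by_cases hk : k ∈ Function.support c
    · exact mul_nonneg (hc k) (hφ k hk)
    · rw [Function.notMem_support.1 hk, zero_mul]
  simp only [map_sum, map_smul, smul_eq_mul] at hsum
  have hzero := (Finset.sum_eq_zero_iff_of_nonneg hterm).1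
    (hsum.antisymm (Finset.sum_nonneg hterm))
  rw [Submodule.span_le]
  rintro _ ⟨k, hk, rfl⟩
  exact (mul_eq_zero.1 (hzero k (Finset.mem_univ k))).resolve_left hk

theorem sum_smul_mem_span_image_support (g : Φ → M) (c : Φ → ℝ) :
    ∑ k, c k • g k ∈ Submodule.span ℝ (g '' Function.support c) :=
  Submodule.sum_mem _ fun k _ => by
    by_cases hk : k ∈ Function.support c
    · exact Submodule.smul_mem _ _ (Submodule.subset_span ⟨k, hk, rfl⟩)
    · simp [Function.notMem_support.1 hk]

theorem exists_finset_forall_dual_apply_eq_zero {ι : Type*} [FiniteDimensional ℝ M]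
    (κ : Φ → ι) (I₀ : Finset ι) {a : Φ → ℝ} (ha : ∀ k, 0 < a k)
    (hsum : ∑ k, a k • g k = 0) :
    ∃ I : Finset ι, I₀ ⊆ I ∧ I.card ≤ I₀.card + Module.finrank ℝ M ∧
      ∀ φ : Module.Dual ℝ M, (∀ k, κ k ∈ I → 0 ≤ φ (g k)) → ∀ k, κ k ∈ I → φ (g k) = 0 := by
  classical
  induction hn : Module.finrank ℝ M using Nat.strong_induction_on generalizing M I₀ with
  | h n ih =>
    subst hn
    by_cases hzero : ∀ k, κ k ∈ I₀ → g k = 0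
    · exact ⟨I₀, subset_rfl, Nat.le_add_right _ _, fun φ _ k hk => by rw [hzero k hk, map_zero]⟩
    push Not at hzero
    obtain ⟨k₀, hk₀, hgk₀⟩ := hzero
    obtain ⟨c, hc, hrel, hne, hli⟩ :=
      exists_nonneg_linearIndepOn_support_add_smul_eq_zero ha hsum hgk₀
    set T := Function.support c
    set W := Submodule.span ℝ (g '' T)
    have hfin : Module.finrank ℝ (M ⧸ W) + T.ncard = Module.finrank ℝ M :=
      finrank_quotient_span_image_add_ncard hli
    have hT : 0 < T.ncard := (Set.ncard_pos T.toFinite).2 hne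
    obtain ⟨I, hI₀, hcard, hI⟩ := ih _ (by omega) (g := fun k => W.mkQ (g k))
      (I₀ ∪ T.toFinset.image κ) (by rw [← map_zero W.mkQ, ← hsum]; simp) rfl
    have hTI : ∀ k ∈ T, κ k ∈ I := fun k hk =>
      hI₀ (Finset.mem_union_right _ (Finset.mem_image_of_mem κ (Set.mem_toFinset.2 hk)))
    refine ⟨I, Finset.union_subset_left hI₀, ?_, fun φ hφ => ?_⟩
    · have := (Finset.card_image_le (f := κ)).trans_eq (Set.ncard_eq_toFinset_card' T).symm
      have := Finset.card_union_le I₀ (T.toFinset.image κ)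
      omega
    · have hφrel : a k₀ * φ (g k₀) + φ (∑ k, c k • g k) = 0 := by
        simpa only [map_add, map_smul, smul_eq_mul, map_zero] using congrArg φ hrel
      have hφ₀ : 0 ≤ a k₀ * φ (g k₀) :=
        mul_nonneg (ha k₀).le (hφ k₀ (hI₀ (Finset.mem_union_left _ hk₀)))
      have hW : W ≤ LinearMap.ker φ :=
        span_image_support_le_ker hc (fun k hk => hφ k (hTI k hk)) (by linarith)
      exact hI (W.liftQ φ hW) hφ

theorem exists_finset_card_add_card_le_ncard_support {ι : Type*} [Fintype ι] [DecidableEq ι]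
    {κ : Φ → ι} (hc : ∀ i, ∑ k with κ k = i, c k = 1) :
    ∃ I₀ : Finset ι, Fintype.card ι + I₀.card ≤ (Function.support c).ncard ∧
      ∀ k ∈ Function.support c, κ k ∉ I₀ →
        c k = 1 ∧ ∀ k' ∈ Function.support c, κ k' = κ k → k' = k := by
  classical
  set T := (Function.support c).toFinset
  have hT {k : Φ} : k ∈ T ↔ c k ≠ 0 := by simp [T]
  have hfib (i : ι) : ∑ k ∈ T with κ k = i, c k = 1 := by
    rw [← hc i]
    refine Finset.sum_subset (Finset.filter_subset_filter _ (Finset.subset_univ T))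
      fun k hk hkT => ?_
    by_contra hck
    exact hkT (Finset.mem_filter.2 ⟨hT.2 hck, (Finset.mem_filter.1 hk).2⟩)
  have hfib_pos (i : ι) : 1 ≤ ({k ∈ T | κ k = i}).card := by
    refine Finset.card_pos.2 (Finset.nonempty_of_sum_ne_zero (f := c) ?_)
    rw [hfib i]
    exact one_ne_zero
  refine ⟨({i | 1 < ({k ∈ T | κ k = i}).card} : Finset ι), ?_, fun k hk hκ => ?_⟩
  · have hTcard : (Function.support c).ncard = T.card := Set.ncard_eq_toFinset_card' _
    rw [hTcard, Finset.card_eq_sum_card_fiberwise (f := κ) (t := Finset.univ)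
      (fun _ _ => Finset.mem_coe.2 (Finset.mem_univ _)), Finset.card_filter, ← Finset.card_univ,
      Finset.card_eq_sum_ones, ← Finset.sum_add_distrib]
    refine Finset.sum_le_sum fun i _ => ?_
    have := hfib_pos i
    split_ifs with h <;> omega
  · have hle : ({k' ∈ T | κ k' = κ k}).card ≤ 1 := by simpa using hκ
    have hmem : k ∈ ({k' ∈ T | κ k' = κ k} : Finset Φ) := by simp [hT.2 hk]
    have huniq := Finset.card_le_one.1 hle
    have hsingle : ({k' ∈ T | κ k' = κ k} : Finset Φ) = {k} :=
      Finset.eq_singleton_iff_unique_mem.2 ⟨hmem, fun k' hk' => huniq k' hk' k hmem⟩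
    refine ⟨by simpa [hsingle] using hfib (κ k), fun k' hk' hκ' => ?_⟩
    exact huniq k' (by simp [hT.2 hk', hκ']) k hmem

theorem exists_dual_apply_eq_span_le_ker_of_indicators {Ψ ι : Type*} [DecidableEq ι] {f : Ψ → M}
    {κ : Ψ → ι} {e : ι → Module.Dual ℝ M} (he : ∀ i k, e i (f k) = if κ k = i then 1 else 0)
    {T : Set Ψ} (hTfin : T.Finite) {I : Finset ι}
    (hT : ∀ k ∈ T, κ k ∉ I → ∀ k' ∈ T, κ k' = κ k → k' = k) {φ : Module.Dual ℝ M}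
    (hφ : ∀ k ∈ T, κ k ∈ I → φ (f k) = 0) :
    ∃ ψ : Module.Dual ℝ M, (∀ k, κ k ∈ I → ψ (f k) = φ (f k)) ∧
      Submodule.span ℝ (f '' T) ≤ LinearMap.ker ψ := by
  classical
  lift T to Finset Ψ using hTfin
  -- Subtracting multiples of the `e i` with `i ∉ I` changes no value of `φ` over `I`.
  set ψ : Module.Dual ℝ M := φ - ∑ k ∈ T with κ k ∉ I, φ (f k) • e (κ k)
  have hψ (k : Ψ) : ψ (f k) =
      φ (f k) - ∑ k' ∈ T with κ k' ∉ I, if κ k = κ k' then φ (f k') else 0 := by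
    simp [ψ, he, LinearMap.sum_apply]
  have hψI (k : Ψ) (hk : κ k ∈ I) : ψ (f k) = φ (f k) := by
    rw [hψ, Finset.sum_eq_zero, sub_zero]
    exact fun k' hk' => if_neg fun h : κ k = κ k' => (Finset.mem_filter.1 hk').2 (h ▸ hk)
  refine ⟨ψ, hψI, Submodule.span_le.2 ?_⟩
  rintro _ ⟨k, hkT, rfl⟩
  change ψ (f k) = 0
  by_cases hk : κ k ∈ I
  · rw [hψI k hk, hφ k hkT hk]
  · rw [hψ, Finset.sum_eq_single k, if_pos rfl, sub_self]
    · intro k' hk' hne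
      exact if_neg fun h => hne (hT k hkT hk k' (Finset.mem_filter.1 hk').1 h.symm)
    · exact fun h => absurd (Finset.mem_filter.2 ⟨hkT, hk⟩) h

theorem exists_finset_forall_dual_apply_eq_zero_of_indicators {ι : Type*} [Fintype ι]
    [DecidableEq ι] [FiniteDimensional ℝ M] {κ : Φ → ι} {e : ι → Module.Dual ℝ M}
    (he : ∀ i k, e i (g k) = if κ k = i then 1 else 0) (hc : ∀ k, 0 < c k)
    (hec : ∀ i, e i (∑ k, c k • g k) = 1)
    (hcard : Module.finrank ℝ M + 2 ≤ 2 * Fintype.card ι) :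
    ∃ (I : Finset ι) (c' : Φ → ℝ), I.Nonempty ∧ Iᶜ.Nonempty ∧ 0 ≤ c' ∧
      (∀ k, κ k ∉ I → c' k = 0 ∨ c' k = 1) ∧ ∑ k, c' k • g k = ∑ k, c k • g k ∧
      ∀ φ : Module.Dual ℝ M, (∀ k, 0 ≤ φ (g k)) → (∀ k, κ k ∈ I → c' k * φ (g k) = 0) →
        ∀ k, κ k ∈ I → φ (g k) = 0 := by
  classical
  obtain ⟨c', hc', hsum, hli⟩ := exists_nonneg_linearIndepOn_support g fun k => (hc k).le
  have hfib (i : ι) : ∑ k with κ k = i, c' k = 1 := by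
    simpa [he, ← hsum, Finset.sum_filter] using hec i
  obtain ⟨I₀, hI₀card, hI₀⟩ := exists_finset_card_add_card_le_ncard_support hfib
  set T := Function.support c'
  set W := Submodule.span ℝ (g '' T)
  have hfin : Module.finrank ℝ (M ⧸ W) + T.ncard = Module.finrank ℝ M :=
    finrank_quotient_span_image_add_ncard hli
  have hWsum : ∑ k, c k • g k ∈ W := hsum ▸ sum_smul_mem_span_image_support g c'
  obtain ⟨i₀⟩ : Nonempty ι := Fintype.card_pos_iff.1 (by omega)
  obtain ⟨I, hI, hIcard, hIφ⟩ := exists_finset_forall_dual_apply_eq_zero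
    (g := fun k => W.mkQ (g k)) κ (insert i₀ I₀) hc
    (by simpa only [← Submodule.mkQ_apply, map_sum, map_smul] using
      (Submodule.Quotient.mk_eq_zero W).2 hWsum)
  have hIlt : I.card < Fintype.card ι := by
    have := Finset.card_insert_le i₀ I₀
    omega
  have hI₀' {k : Φ} (hk : κ k ∉ I) : κ k ∉ I₀ := fun h => hk (hI (Finset.mem_insert_of_mem h))
  refine ⟨I, c', ⟨i₀, hI (Finset.mem_insert_self _ _)⟩, ?_, hc', fun k hk => ?_, hsum, ?_⟩
  · rw [← Finset.card_pos, Finset.card_compl]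
    omega
  · exact or_iff_not_imp_left.2 fun hck => (hI₀ k hck (hI₀' hk)).1
  intro φ hφ hφI
  obtain ⟨ψ, hψI, hψW⟩ := exists_dual_apply_eq_span_le_ker_of_indicators he T.toFinite
    (fun k hk hkI => (hI₀ k hk (hI₀' hkI)).2)
    fun k hk hkI => (mul_eq_zero.1 (hφI k hkI)).resolve_left hk
  intro k hk
  rw [← hψI k hk]
  exact hIφ (W.liftQ ψ hψW) (fun k hk => (hψI k hk).symm ▸ hφ k) k hk

end ConicCombinations

theorem exists_pos_weights_sum_smul_eq_zero {V : Type*} [AddCommGroup V] [Module ℝ V]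
    [TopologicalSpace V] [ContinuousSMul ℝ V] {t : Finset V}
    (h0 : 0 ∈ interior (convexHull ℝ (t : Set V))) :
    ∃ c : V → ℝ, (∀ v ∈ t, 0 < c v) ∧ ∑ v ∈ t, c v = 1 ∧ ∑ v ∈ t, c v • v = 0 := by
  set σ := ∑ v ∈ t, v
  have hcont : ContinuousAt (fun δ : ℝ => δ • σ) 0 := by fun_prop
  have hnear : ∀ᶠ δ : ℝ in nhds 0, δ • σ ∈ convexHull ℝ (t : Set V) :=
    hcont.eventually_mem (by simpa using mem_interior_iff_mem_nhds.1 h0)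
  obtain ⟨ε, hε, hball⟩ := Metric.eventually_nhds_iff.1 hnear
  have hmem := hball (y := -(ε / 2)) (by simp [abs_of_pos hε, hε])
  obtain ⟨c, hc, hc1, hsum⟩ := Finset.mem_convexHull'.1 hmem
  have hpos : 0 < 1 + t.card * (ε / 2) := by positivity
  refine ⟨fun v => (1 + t.card * (ε / 2))⁻¹ * (c v + ε / 2), fun v hv => ?_, ?_, ?_⟩
  · have := hc v hv
    positivity
  · rw [← Finset.mul_sum, Finset.sum_add_distrib, hc1, Finset.sum_const, nsmul_eq_mul,
      inv_mul_cancel₀ hpos.ne']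
  · simp only [mul_smul, add_smul]
    rw [← Finset.smul_sum, Finset.sum_add_distrib, hsum, ← Finset.smul_sum, ← add_smul,
      neg_add_cancel, zero_smul, smul_zero]

section PolarBody

variable {D : Type*} [NormedAddCommGroup D] [NormedSpace ℝ D] {s : Set D}

/-- The one-sided polar of a set: the continuous linear functionals bounded above by `1` on it.
The facets of a polytope around the origin are cut out by the extreme points of its polar body. -/
def polarBody (s : Set D) : Set (D →L[ℝ] ℝ) := {f | ∀ x ∈ s, f x ≤ 1}

theorem polarBody_eq_iInter : polarBody s = ⋂ x ∈ s, {f : D →L[ℝ] ℝ | f x ≤ 1} := by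
  ext f
  simp [polarBody]

theorem convex_polarBody : Convex ℝ (polarBody s) := by
  rw [polarBody_eq_iInter]
  exact convex_iInter₂ fun x _ =>
    convex_halfSpace_le (ContinuousLinearMap.apply ℝ ℝ x).toLinearMap.isLinear 1

theorem isClosed_polarBody : IsClosed (polarBody s) := by
  rw [polarBody_eq_iInter]
  exact isClosed_biInter fun x _ =>
    isClosed_le (ContinuousLinearMap.apply ℝ ℝ x).continuous continuous_const

theorem polarBody_convexHull : polarBody (convexHull ℝ s) = polarBody s :=
  Set.Subset.antisymm (fun _ hf x hx => hf x (subset_convexHull ℝ s hx)) fun f hf _ hx =>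
    convexHull_min hf (convex_halfSpace_le f.toLinearMap.isLinear 1) hx

theorem isBounded_polarBody (h0 : (0 : D) ∈ interior s) : Bornology.IsBounded (polarBody s) := by
  obtain ⟨ε, hε, hball⟩ := Metric.nhds_basis_closedBall.mem_iff.1 (mem_interior_iff_mem_nhds.1 h0)
  refine isBounded_iff_forall_norm_le.2 ⟨1 / ε, fun f hf => ?_⟩
  refine ContinuousLinearMap.opNorm_bound_of_ball_bound hε 1 f fun z hz => ?_
  have hneg : f (-z) ≤ 1 := hf _ (hball (by simpa using hz))
  rw [map_neg] at hneg
  exact abs_le.2 ⟨by linarith, hf z (hball hz)⟩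

theorem zero_mem_interior_polarBody (hs : s.Finite) :
    (0 : D →L[ℝ] ℝ) ∈ interior (polarBody s) := by
  refine mem_interior.2 ⟨⋂ x ∈ s, {f | f x < 1}, fun f hf x hx => ?_, ?_, ?_⟩
  · exact le_of_lt (Set.mem_iInter₂.1 hf x hx)
  · exact hs.isOpen_biInter fun x _ =>
      isOpen_lt (ContinuousLinearMap.apply ℝ ℝ x).continuous continuous_const
  · simp

theorem mem_of_forall_mem_polarBody_le_one (hs : Convex ℝ s) (hsc : IsClosed s) (h0 : 0 ∈ s)
    {y : D} (hy : ∀ f ∈ polarBody s, f y ≤ 1) : y ∈ s := by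
  by_contra hys
  obtain ⟨f, t, hft, hty⟩ := geometric_hahn_banach_closed_point hs hsc hys
  have ht : 0 < t := by simpa using hft 0 h0
  have hf : t⁻¹ • f ∈ polarBody s := fun x hx => by
    simpa using inv_mul_le_one_of_le₀ (hft x hx).le ht.le
  have : t⁻¹ * f y ≤ 1 := hy _ hf
  rw [inv_mul_le_one₀ ht] at this
  linarith

variable [FiniteDimensional ℝ D] {f : D →L[ℝ] ℝ}

theorem span_contact_eq_top_of_mem_extremePoints_polarBody (hs : s.Finite)
    (hf : f ∈ (polarBody s).extremePoints ℝ) : Submodule.span ℝ {x ∈ s | f x = 1} = ⊤ := by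
  by_contra hne
  obtain ⟨g, hg0, hg⟩ := Submodule.exists_le_ker_of_lt_top _ (lt_top_iff_ne_top.2 hne)
  set g' : D →L[ℝ] ℝ := LinearMap.toContinuousLinearMap g
  -- Near a contact point `f + t • g'` does not move, and at the other points there is room.
  have hnear : ∀ᶠ t : ℝ in nhds 0, f + t • g' ∈ polarBody s := by
    refine (Filter.eventually_all_finite hs).2 fun x hx => ?_
    rcases (hf.1 x hx).eq_or_lt with hfx | hfx
    · have hgx : g x = 0 := hg (Submodule.subset_span ⟨hx, hfx⟩)
      exact Filter.Eventually.of_forall fun t => by simp [g', hgx, hfx]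
    · have hcont : Continuous fun t : ℝ => (f + t • g') x := by
        simp only [add_apply, smul_apply, smul_eq_mul]
        fun_prop
      exact (hcont.continuousAt.eventually_lt_const (by simpa using hfx)).mono fun _ => le_of_lt
  obtain ⟨ε, hε, hball⟩ := Metric.eventually_nhds_iff.1 hnear
  have hplus := hball (y := ε / 2) (by simp [abs_of_pos hε, hε])
  have hminus := hball (y := -(ε / 2)) (by simp [abs_of_pos hε, hε])
  have hseg : f ∈ openSegment ℝ (f + (ε / 2) • g') (f + (-(ε / 2)) • g') :=
    ⟨1 / 2, 1 / 2, by norm_num, by norm_num, by norm_num, by module⟩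
  have hzero : (ε / 2) • g' = 0 := by simpa using hf.2 hplus hminus hseg
  refine hg0 (LinearMap.ext fun x => ?_)
  exact congrArg (· x) ((smul_eq_zero.1 hzero).resolve_left (half_pos hε).ne')

theorem finite_extremePoints_polarBody (hs : s.Finite) :
    ((polarBody s).extremePoints ℝ).Finite := by
  refine Set.Finite.of_finite_image (f := fun f : D →L[ℝ] ℝ => {x ∈ s | f x = 1})
    (hs.finite_subsets.subset ?_) fun f hf g _ hfg => ?_
  · rintro _ ⟨f, _, rfl⟩
    exact Set.sep_subset s _
  · refine ContinuousLinearMap.coe_injective (LinearMap.ext_on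
      (span_contact_eq_top_of_mem_extremePoints_polarBody hs hf) fun x hx => ?_)
    exact hx.2.trans (hfg.subset hx).2.symm

theorem convexHull_extremePoints_polarBody (hs : s.Finite)
    (h0 : 0 ∈ interior (convexHull ℝ s)) :
    convexHull ℝ ((polarBody s).extremePoints ℝ) = polarBody s := by
  have hcompact : IsCompact (polarBody s) := Metric.isCompact_of_isClosed_isBounded
    isClosed_polarBody (polarBody_convexHull (s := s) ▸ isBounded_polarBody h0)
  rw [← (finite_extremePoints_polarBody hs).isClosed_convexHull (𝕜 := ℝ) |>.closure_eq]
  exact closure_convexHull_extremePoints hcompact convex_polarBody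

theorem mem_convexHull_of_forall_extremePoints_polarBody (hs : s.Finite)
    (h0 : 0 ∈ interior (convexHull ℝ s)) {y : D}
    (hy : ∀ f ∈ (polarBody s).extremePoints ℝ, f y ≤ 1) : y ∈ convexHull ℝ s := by
  refine mem_of_forall_mem_polarBody_le_one (convex_convexHull ℝ s)
    (hs.isClosed_convexHull (𝕜 := ℝ)) (interior_subset h0) fun f hf => ?_
  rw [polarBody_convexHull, ← convexHull_extremePoints_polarBody hs h0] at hf
  exact convexHull_min hy
    (convex_halfSpace_le (ContinuousLinearMap.apply ℝ ℝ y).toLinearMap.isLinear 1) hf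

theorem exists_pos_weights_extremePoints_polarBody (hs : s.Finite)
    (h0 : 0 ∈ interior (convexHull ℝ s)) [Fintype ((polarBody s).extremePoints ℝ)] :
    ∃ c : (polarBody s).extremePoints ℝ → ℝ,
      (∀ f, 0 < c f) ∧ ∑ f, c f = 1 ∧ ∀ y, ∑ f, c f * f.1 y = 0 := by
  have hint : 0 ∈ interior (convexHull ℝ
      (((polarBody s).extremePoints ℝ).toFinset : Set (D →L[ℝ] ℝ))) := by
    rw [Set.coe_toFinset, convexHull_extremePoints_polarBody hs h0]
    exact zero_mem_interior_polarBody hs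
  obtain ⟨c, hc, hc1, hc0⟩ := exists_pos_weights_sum_smul_eq_zero hint
  rw [← Finset.sum_set_coe] at hc1 hc0
  refine ⟨fun f => c f, fun f => hc f (Set.mem_toFinset.2 f.2), hc1, fun y => ?_⟩
  simpa [sum_apply] using congrArg (fun f : D →L[ℝ] ℝ => f y) hc0

end PolarBody

section LatticePoints

variable {N : ℕ} {x y : Fin N → ℝ}

theorem IsLatticePt.add (hx : IsLatticePt x) (hy : IsLatticePt y) : IsLatticePt (x + y) := by
  intro i
  obtain ⟨a, ha⟩ := hx i
  obtain ⟨b, hb⟩ := hy i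
  exact ⟨a + b, by simp [ha, hb]⟩

theorem IsLatticePt.sub (hx : IsLatticePt x) (hy : IsLatticePt y) : IsLatticePt (x - y) := by
  intro i
  obtain ⟨a, ha⟩ := hx i
  obtain ⟨b, hb⟩ := hy i
  exact ⟨a - b, by simp [ha, hb]⟩

theorem IsLatticePt.natCast_smul (hx : IsLatticePt x) (r : ℕ) : IsLatticePt ((r : ℝ) • x) := by
  intro i
  obtain ⟨a, ha⟩ := hx i
  exact ⟨r * a, by simp [ha]⟩

theorem IsLatticePt.sum {ι : Type*} [Fintype ι] {p : ι → Fin N → ℝ}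
    (hp : ∀ i, IsLatticePt (p i)) : IsLatticePt (∑ i, p i) := by
  intro j
  choose z hz using fun i => hp i j
  exact ⟨∑ i, z i, by simp [hz]⟩

theorem IsIntegralOn.mono {P Q : Set (Fin N → ℝ)} {u : (Fin N → ℝ) →ᵃ[ℝ] ℝ}
    (hu : IsIntegralOn P u) (hQP : Q ⊆ P) : IsIntegralOn Q u :=
  fun y hy => hu y (affineSpan_mono ℝ hQP hy)

theorem isIntegralOn_of_forall_apply_eq_sum {P : Set (Fin N → ℝ)} {Φ : Type*} {s : Finset Φ}
    {u : Φ → (Fin N → ℝ) →ᵃ[ℝ] ℝ} {a : Φ → ℝ} {ℓ : (Fin N → ℝ) →ᵃ[ℝ] ℝ}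
    (hu : ∀ k ∈ s, IsIntegralOn P (u k)) (ha : ∀ k ∈ s, ∃ m : ℤ, a k = m)
    (hℓ : ∀ y, ℓ y = ∑ k ∈ s, a k * u k y) : IsIntegralOn P ℓ := by
  intro y hy hyl
  choose! n hn using fun k hk => hu k hk y hy hyl
  choose! m hm using ha
  refine ⟨∑ k ∈ s, m k * n k, ?_⟩
  rw [hℓ, Int.cast_sum]
  exact Finset.sum_congr rfl fun k hk => by rw [hm k hk, hn k hk, Int.cast_mul]

end LatticePoints

section IntrinsicInterior

variable {E : Type*} [NormedAddCommGroup E] [NormedSpace ℝ E] {R : Set E}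

theorem pos_of_mem_intrinsicInterior {u : E →ᵃ[ℝ] ℝ} (hu : ∀ y ∈ R, 0 ≤ u y)
    (hpos : ∃ y ∈ R, 0 < u y) {z : E} (hz : z ∈ intrinsicInterior ℝ R) : 0 < u z := by
  obtain ⟨q, hqR, hq⟩ := hpos
  obtain ⟨y, hy, rfl⟩ := mem_intrinsicInterior.1 hz
  have hqa : q ∈ affineSpan ℝ R := subset_affineSpan ℝ R hqR
  -- The ray from `q` through `y` stays in `R` slightly beyond `y`.
  set γ : ℝ → affineSpan ℝ R := fun t =>
    ⟨AffineMap.lineMap q (y : E) t, AffineMap.lineMap_mem t hqa y.2⟩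
  have hγ : Continuous γ := AffineMap.lineMap_continuous.subtype_mk _
  have hnear : ∀ᶠ t in nhds (1 : ℝ), γ t ∈ interior ((↑) ⁻¹' R : Set (affineSpan ℝ R)) :=
    hγ.continuousAt.eventually_mem (isOpen_interior.mem_nhds (by simpa [γ] using hy))
  obtain ⟨ε, hε, hball⟩ := Metric.eventually_nhds_iff.1 hnear
  have hmem : γ (1 + ε / 2) ∈ ((↑) ⁻¹' R : Set (affineSpan ℝ R)) :=
    interior_subset (hball (by simp [abs_of_pos hε, hε]))
  have hle : 0 ≤ u (AffineMap.lineMap q (y : E) (1 + ε / 2)) := hu _ hmem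
  rw [AffineMap.apply_lineMap, AffineMap.lineMap_apply_module] at hle
  simp only [smul_eq_mul] at hle
  nlinarith

theorem mem_intrinsicInterior_of_forall_pos [FiniteDimensional ℝ E] {Φ : Type*} [Finite Φ]
    {u : Φ → E →ᵃ[ℝ] ℝ} (hu : ∀ y ∈ affineSpan ℝ R, (∀ k, 0 ≤ u k y) → y ∈ R) {z : E}
    (hz : z ∈ affineSpan ℝ R) (hpos : ∀ k, 0 < u k z) : z ∈ intrinsicInterior ℝ R := by
  refine mem_intrinsicInterior.2 ⟨⟨z, hz⟩, mem_interior.2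
    ⟨⋂ k, {y : affineSpan ℝ R | 0 < u k y}, fun y hy => ?_, ?_, ?_⟩, rfl⟩
  · exact hu y y.2 fun k => (Set.mem_iInter.1 hy k).le
  · exact isOpen_iInter_of_finite fun k => isOpen_lt continuous_const
      ((u k).continuous_of_finiteDimensional.comp continuous_subtype_val)
  · exact Set.mem_iInter.2 hpos

theorem zero_mem_interior_preimage_of_mem_intrinsicInterior {x : E}
    (hx : x ∈ intrinsicInterior ℝ R) :
    0 ∈ interior {d : (affineSpan ℝ R).direction | (d : E) + x ∈ R} := by
  obtain ⟨y, hy, rfl⟩ := mem_intrinsicInterior.1 hx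
  set γ : (affineSpan ℝ R).direction → affineSpan ℝ R := fun d =>
    ⟨(d : E) + y, AffineSubspace.vadd_mem_of_mem_direction d.2 y.2⟩
  have hγ : Continuous γ := (continuous_subtype_val.add continuous_const).subtype_mk _
  refine preimage_interior_subset_interior_preimage hγ (t := (↑) ⁻¹' R) ?_
  simpa [γ] using hy

end IntrinsicInterior

section BalancedPresentations

variable {E Φ : Type*} [Fintype Φ]

/-- A presentation of the convex set `P` inside its affine hull by inequalities `0 ≤ u k`,
balanced by positive weights `c k` for which `∑ k, c k * u k` is identically `1` on `P`. -/
structure IsBalancedPresentation [AddCommGroup E] [Module ℝ E] (P : Set E) (u : Φ → E →ᵃ[ℝ] ℝ)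
    (c : Φ → ℝ) : Prop where
  nonneg : ∀ k, ∀ y ∈ P, 0 ≤ u k y
  mem_of_nonneg : ∀ y ∈ affineSpan ℝ P, (∀ k, 0 ≤ u k y) → y ∈ P
  weight_pos : ∀ k, 0 < c k
  sum_eq_one : ∀ y ∈ P, ∑ k, c k * u k y = 1

/-- The functional with value `r * u y` at `r • y`, which plays on `r • P` the role that `u` plays
on `P`. -/
noncomputable def dilate [AddCommGroup E] [Module ℝ E] (r : ℝ) (u : E →ᵃ[ℝ] ℝ) : E →ᵃ[ℝ] ℝ :=
  u.linear.toAffineMap + AffineMap.const ℝ E (r * u 0)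

section Module

variable [AddCommGroup E] [Module ℝ E] {P : Set E}

theorem dilate_apply (r : ℝ) (u : E →ᵃ[ℝ] ℝ) (y : E) :
    dilate r u y = u.linear y + r * u 0 := rfl

theorem affineMap_apply_eq_linear_add (u : E →ᵃ[ℝ] ℝ) (y : E) : u y = u.linear y + u 0 :=
  congrFun u.decomp y

theorem dilate_smul (r : ℝ) (u : E →ᵃ[ℝ] ℝ) (y : E) : dilate r u (r • y) = r * u y := by
  rw [dilate_apply, affineMap_apply_eq_linear_add u y, map_smul, smul_eq_mul, mul_add]

theorem dilate_card_sum {ι : Type*} [Fintype ι] (u : E →ᵃ[ℝ] ℝ) (p : ι → E) :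
    dilate (Fintype.card ι) u (∑ i, p i) = ∑ i, u (p i) := by
  simp only [dilate_apply, affineMap_apply_eq_linear_add u (p _), map_sum, Finset.sum_add_distrib,
    Finset.sum_const, Finset.card_univ, nsmul_eq_mul]

namespace IsBalancedPresentation

variable {u : Φ → E →ᵃ[ℝ] ℝ} {c : Φ → ℝ}

theorem convex (h : IsBalancedPresentation P u c) : Convex ℝ P := by
  have hP : P = (affineSpan ℝ P : Set E) ∩ ⋂ k, u k ⁻¹' Set.Ici 0 := Set.Subset.antisymm
    (fun y hy => ⟨subset_affineSpan ℝ P hy, Set.mem_iInter.2 fun k => h.nonneg k y hy⟩)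
    fun y hy => h.mem_of_nonneg y hy.1 (Set.mem_iInter.1 hy.2)
  rw [hP]
  exact (affineSpan ℝ P).convex.inter
    (convex_iInter fun k => (convex_Ici 0).affine_preimage (u k))

theorem smul (h : IsBalancedPresentation P u c) {r : ℝ} (hr : 0 < r) :
    IsBalancedPresentation (r • P) (fun k => dilate r (u k)) (fun k => c k / r) where
  nonneg := by
    rintro k _ ⟨y, hy, rfl⟩
    simpa only [dilate_smul] using mul_nonneg hr.le (h.nonneg k y hy)
  mem_of_nonneg := by
    intro z hz hzk
    rw [← AffineSubspace.smul_span] at hz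
    obtain ⟨y, hy, rfl⟩ := hz
    refine Set.smul_mem_smul_set (h.mem_of_nonneg y hy fun k => ?_)
    exact nonneg_of_mul_nonneg_right ((hzk k).trans_eq (dilate_smul r (u k) y)) hr
  weight_pos k := div_pos (h.weight_pos k) hr
  sum_eq_one := by
    rintro _ ⟨y, hy, rfl⟩
    rw [← h.sum_eq_one y hy]
    refine Finset.sum_congr rfl fun k _ => ?_
    simp only [dilate_smul]
    field_simp

theorem face (h : IsBalancedPresentation P u c) (K : Set Φ) [Fintype K] :
    IsBalancedPresentation {y ∈ P | ∀ k ∉ K, u k y = 0} (fun k : K => u k) (fun k : K => c k) where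
  nonneg k y hy := h.nonneg k y hy.1
  mem_of_nonneg y hy hyk := by
    have hoff : ∀ k ∉ K, u k y = 0 := fun k hk =>
      AffineMap.eqOn_affineSpan (g := AffineMap.const ℝ E 0) (fun z hz => hz.2 k hk) hy
    refine ⟨h.mem_of_nonneg y (affineSpan_mono ℝ (Set.sep_subset P _) hy) fun k => ?_, hoff⟩
    by_cases hk : k ∈ K
    · exact hyk ⟨k, hk⟩
    · exact (hoff k hk).ge
  weight_pos k := h.weight_pos k
  sum_eq_one y hy := by
    rw [Finset.sum_set_coe (f := fun k => c k * u k y), ← h.sum_eq_one y hy.1]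
    refine Finset.sum_subset (Finset.subset_univ _) fun k _ hk => ?_
    rw [hy.2 k (by simpa using hk), mul_zero]

theorem sum_weight_eq_card (h : IsBalancedPresentation P u c) {ι : Type*} [Fintype ι] {p : ι → E}
    (hp : ∀ i, p i ∈ P) (hup : ∀ k, ∑ i, u k (p i) = 1) : ∑ k, c k = Fintype.card ι :=
  calc ∑ k, c k = ∑ k, ∑ i, c k * u k (p i) := by simp only [← Finset.mul_sum, hup, mul_one]
    _ = ∑ i, ∑ k, c k * u k (p i) := Finset.sum_comm
    _ = Fintype.card ι := by simp [h.sum_eq_one _ (hp _)]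

end IsBalancedPresentation

end Module

end BalancedPresentations

section Codegree

variable {N : ℕ}

theorem isIntegralOn_dilate {P : Set (Fin N → ℝ)} {u : (Fin N → ℝ) →ᵃ[ℝ] ℝ}
    (hu : IsIntegralOn P u) {v : Fin N → ℝ} (hv : v ∈ affineSpan ℝ P) (hvl : IsLatticePt v) {r : ℕ}
    (hr : 0 < r) : IsIntegralOn ((r : ℝ) • P) (dilate r u) := by
  intro y hy hyl
  have hr0 : (r : ℝ) ≠ 0 := by positivity
  rw [← AffineSubspace.smul_span] at hy
  obtain ⟨x, hx, rfl⟩ := hy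
  have hline : AffineMap.lineMap v x (r : ℝ) = (r : ℝ) • x - (r : ℝ) • v + v := by
    simp [AffineMap.lineMap_apply, smul_sub]
  obtain ⟨a, ha⟩ := hu _ (AffineMap.lineMap_mem _ hv hx)
    (hline ▸ (hyl.sub (hvl.natCast_smul r)).add hvl)
  obtain ⟨b, hb⟩ := hu v hv hvl
  rw [AffineMap.apply_lineMap, AffineMap.lineMap_apply_module, hb, smul_eq_mul, smul_eq_mul] at ha
  refine ⟨a + (r - 1) * b, (dilate_smul (r : ℝ) u x).trans ?_⟩
  push_cast
  linear_combination ha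

theorem IsIntegralOn.one_le_of_mem_intrinsicInterior {R : Set (Fin N → ℝ)}
    {u : (Fin N → ℝ) →ᵃ[ℝ] ℝ} (hint : IsIntegralOn R u) (hu : ∀ y ∈ R, 0 ≤ u y)
    (hpos : ∃ y ∈ R, 0 < u y) {z : Fin N → ℝ} (hz : z ∈ intrinsicInterior ℝ R)
    (hzl : IsLatticePt z) : 1 ≤ u z := by
  obtain ⟨n, hn⟩ := hint z (subset_affineSpan ℝ R (intrinsicInterior_subset hz)) hzl
  have h0 : 0 < u z := pos_of_mem_intrinsicInterior hu hpos hz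
  rw [hn] at h0 ⊢
  exact_mod_cast h0

theorem sum_mem_card_smul {E ι : Type*} [AddCommGroup E] [Module ℝ E] [Fintype ι]
    [Nonempty ι] {s : Set E} (hs : Convex ℝ s) {p : ι → E} (hp : ∀ i, p i ∈ s) :
    ∑ i, p i ∈ (Fintype.card ι : ℝ) • s := by
  have hcard : (Fintype.card ι : ℝ) ≠ 0 := by simp
  rw [Set.mem_smul_set_iff_inv_smul_mem₀ hcard, Finset.smul_sum]
  exact hs.sum_mem (fun _ _ => by positivity) (by simp) fun i _ => hp i

theorem exists_mem_forall_card_mul_apply_eq_sum {E ι : Type*} [AddCommGroup E] [Module ℝ E]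
    [Fintype ι] [Nonempty ι] {s : Set E} (hs : Convex ℝ s) {q : ι → E} (hq : ∀ i, q i ∈ s) :
    ∃ e ∈ s, ∀ ℓ : E →ᵃ[ℝ] ℝ, Fintype.card ι * ℓ e = ∑ i, ℓ (q i) := by
  obtain ⟨e, he, hsum⟩ := sum_mem_card_smul hs hq
  refine ⟨e, he, fun ℓ => ?_⟩
  rw [← dilate_smul, ← dilate_card_sum]
  exact congrArg _ hsum

namespace IsBalancedPresentation

variable {Φ ι : Type*} [Fintype Φ] [Fintype ι] [Nonempty ι] {Q : Set (Fin N → ℝ)}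
  {u : Φ → (Fin N → ℝ) →ᵃ[ℝ] ℝ} {c : Φ → ℝ} {p : ι → Fin N → ℝ}

theorem sum_mem_intrinsicInterior (h : IsBalancedPresentation Q u c) (hp : ∀ i, p i ∈ Q)
    (hup : ∀ k, ∑ i, u k (p i) = 1) :
    ∑ i, p i ∈ intrinsicInterior ℝ ((Fintype.card ι : ℝ) • Q) := by
  have hcard : (0 : ℝ) < Fintype.card ι := by exact_mod_cast Fintype.card_pos
  refine mem_intrinsicInterior_of_forall_pos (h.smul hcard).mem_of_nonneg
    (subset_affineSpan ℝ _ (sum_mem_card_smul h.convex hp)) fun k => ?_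
  rw [dilate_card_sum, hup]
  exact one_pos

theorem one_le_dilate_of_mem_intrinsicInterior (h : IsBalancedPresentation Q u c)
    (hint : ∀ k, IsIntegralOn Q (u k)) (hpos : ∀ k, ∃ y ∈ Q, 0 < u k y) {v : Fin N → ℝ}
    (hv : v ∈ Q) (hvl : IsLatticePt v) {r : ℕ} (hr : 0 < r) {z : Fin N → ℝ}
    (hz : z ∈ intrinsicInterior ℝ ((r : ℝ) • Q)) (hzl : IsLatticePt z) (k : Φ) :
    1 ≤ dilate r (u k) z := by
  have hr' : (0 : ℝ) < r := by exact_mod_cast hr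
  obtain ⟨y, hy, hyk⟩ := hpos k
  have hdil : IsIntegralOn ((r : ℝ) • Q) (dilate r (u k)) :=
    isIntegralOn_dilate (hint k) (subset_affineSpan ℝ Q hv) hvl hr
  refine hdil.one_le_of_mem_intrinsicInterior ((h.smul hr').nonneg k)
    ⟨_, Set.smul_mem_smul_set hy, ?_⟩ hz hzl
  rw [dilate_smul]
  positivity

theorem sum_weight_le_of_mem_intrinsicInterior (h : IsBalancedPresentation Q u c)
    (hint : ∀ k, IsIntegralOn Q (u k)) (hpos : ∀ k, ∃ y ∈ Q, 0 < u k y) {v : Fin N → ℝ}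
    (hv : v ∈ Q) (hvl : IsLatticePt v) {r : ℕ} (hr : 0 < r) {z : Fin N → ℝ}
    (hz : z ∈ intrinsicInterior ℝ ((r : ℝ) • Q)) (hzl : IsLatticePt z) : ∑ k, c k ≤ r := by
  have hr' : (0 : ℝ) < r := by exact_mod_cast hr
  rw [← div_le_one hr', Finset.sum_div, ← (h.smul hr').sum_eq_one z (intrinsicInterior_subset hz)]
  exact Finset.sum_le_sum fun k _ => le_mul_of_one_le_right ((h.smul hr').weight_pos k).le
    (h.one_le_dilate_of_mem_intrinsicInterior hint hpos hv hvl hr hz hzl k)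

theorem polyCodeg_eq_card (h : IsBalancedPresentation Q u c) (hint : ∀ k, IsIntegralOn Q (u k))
    (hp : ∀ i, p i ∈ Q) (hpl : ∀ i, IsLatticePt (p i)) (hup : ∀ k, ∑ i, u k (p i) = 1) :
    polyCodeg Q = Fintype.card ι := by
  refine IsLeast.csInf_eq ⟨⟨Fintype.card_pos, fun hollow =>
    hollow _ (h.sum_mem_intrinsicInterior hp hup) (IsLatticePt.sum hpl)⟩, ?_⟩
  rintro r ⟨hr, hollow⟩
  simp only [IsHollow, not_forall, not_not] at hollow
  obtain ⟨z, hz, hzl⟩ := hollow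
  have hpos : ∀ k, ∃ y ∈ Q, 0 < u k y := by
    intro k
    obtain ⟨i, -, hi⟩ := Finset.exists_lt_of_sum_lt
      (show ∑ _i : ι, (0 : ℝ) < ∑ i, u k (p i) by simp [hup])
    exact ⟨p i, hp i, hi⟩
  have hle := h.sum_weight_le_of_mem_intrinsicInterior hint hpos (hp (Classical.arbitrary ι))
    (hpl _) hr hz hzl
  rw [h.sum_weight_eq_card hp hup] at hle
  exact_mod_cast hle

end IsBalancedPresentation

end Codegree

section FacetPresentation

theorem convexHull_preimage_of_injective {E F : Type*} [AddCommGroup E] [Module ℝ E]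
    [AddCommGroup F] [Module ℝ F] {f : E →ᵃ[ℝ] F} (hf : Function.Injective f) {s : Set F}
    (hs : s ⊆ Set.range f) : convexHull ℝ (f ⁻¹' s) = f ⁻¹' convexHull ℝ s := by
  rw [← Set.preimage_image_eq (convexHull ℝ (f ⁻¹' s)) hf, f.image_convexHull,
    Set.image_preimage_eq_of_subset hs]

universe v

variable {E : Type v} [NormedAddCommGroup E] [NormedSpace ℝ E] {s : Set E} {x : E}

theorem convexHull_preimage_direction (hx : x ∈ affineSpan ℝ s) :
    convexHull ℝ {d : (affineSpan ℝ (convexHull ℝ s)).direction | (d : E) + x ∈ s} =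
      {d : (affineSpan ℝ (convexHull ℝ s)).direction | (d : E) + x ∈ convexHull ℝ s} := by
  set D := (affineSpan ℝ (convexHull ℝ s)).direction
  have hf : Function.Injective (D.subtype.toAffineMap + AffineMap.const ℝ D x) :=
    fun d e hde => Subtype.ext (add_right_cancel hde)
  refine convexHull_preimage_of_injective hf fun y hy => ?_
  have hyx : y - x ∈ D := AffineSubspace.vsub_mem_direction
    (subset_affineSpan ℝ _ (subset_convexHull ℝ s hy)) (by rwa [affineSpan_convexHull])
  exact ⟨⟨y - x, hyx⟩, sub_add_cancel y x⟩

theorem exists_affineMap_add_apply (x : E) {D : Submodule ℝ E} (f : D →ₗ[ℝ] ℝ) :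
    ∃ h : E →ᵃ[ℝ] ℝ, ∀ d : D, h (d + x) = 1 - f d := by
  obtain ⟨F, hF⟩ := f.exists_extend
  refine ⟨AffineMap.const ℝ E (1 + F x) - F.toAffineMap, fun d => ?_⟩
  have hFd : F d = f d := LinearMap.congr_fun hF d
  simp [hFd]

theorem add_mem_affineSpan_insert {D : Submodule ℝ E} {T : Set D} (hT : Submodule.span ℝ T = ⊤)
    {C : Set E} (hC : ∀ e ∈ T, (e : E) + x ∈ C) (d : D) :
    (d : E) + x ∈ affineSpan ℝ (insert x C) := by
  have hx : x ∈ affineSpan ℝ (insert x C) := subset_affineSpan ℝ _ (Set.mem_insert x C)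
  have hle : Submodule.span ℝ T ≤ (affineSpan ℝ (insert x C)).direction.comap D.subtype := by
    refine Submodule.span_le.2 fun e he => ?_
    have hex : (e : E) + x ∈ affineSpan ℝ (insert x C) :=
      subset_affineSpan ℝ _ (Set.mem_insert_of_mem x (hC e he))
    simpa using AffineSubspace.vsub_mem_direction hex hx
  exact AffineSubspace.vadd_mem_of_mem_direction (hle (hT ▸ Submodule.mem_top)) hx

variable [FiniteDimensional ℝ E]

theorem exists_facet_presentation (hs : s.Finite)
    (hx : x ∈ intrinsicInterior ℝ (convexHull ℝ s)) :
    ∃ (Φ : Type v) (_ : Fintype Φ) (h : Φ → E →ᵃ[ℝ] ℝ) (c : Φ → ℝ),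
      IsBalancedPresentation (convexHull ℝ s) h c ∧ ∀ k, h k x = 1 ∧
        affineSpan ℝ (convexHull ℝ s) ≤ affineSpan ℝ (insert x {t ∈ s | h k t = 0}) := by
  set D := (affineSpan ℝ (convexHull ℝ s)).direction
  set S : Set D := {d | (d : E) + x ∈ s}
  have hxa : x ∈ affineSpan ℝ (convexHull ℝ s) :=
    subset_affineSpan ℝ _ (intrinsicInterior_subset hx)
  have hS : S.Finite := hs.preimage fun d _ e _ hde => Subtype.ext (add_right_cancel hde)
  have hconv : convexHull ℝ S = {d : D | (d : E) + x ∈ convexHull ℝ s} :=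
    convexHull_preimage_direction (by rwa [affineSpan_convexHull] at hxa)
  have h0 : 0 ∈ interior (convexHull ℝ S) :=
    hconv ▸ zero_mem_interior_preimage_of_mem_intrinsicInterior hx
  have hcoord : ∀ y ∈ affineSpan ℝ (convexHull ℝ s), ∃ d : D, (d : E) + x = y := fun y hy =>
    ⟨⟨y - x, AffineSubspace.vsub_mem_direction hy hxa⟩, sub_add_cancel y x⟩
  have := (finite_extremePoints_polarBody hS).fintype
  obtain ⟨c, hc, hc1, hc0⟩ := exists_pos_weights_extremePoints_polarBody hS h0
  choose h hh using fun f : (polarBody S).extremePoints ℝ =>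
    exists_affineMap_add_apply x f.1.toLinearMap
  refine ⟨(polarBody S).extremePoints ℝ, inferInstance, h, c, ⟨?_, ?_, hc, ?_⟩, ?_⟩
  · intro f y hy
    obtain ⟨d, rfl⟩ := hcoord y (subset_affineSpan ℝ (convexHull ℝ s) hy)
    have hd : d ∈ convexHull ℝ S := hconv.superset hy
    have hfd : f.1 ∈ polarBody (convexHull ℝ S) := by
      rw [polarBody_convexHull]
      exact f.2.1
    rw [hh]
    exact sub_nonneg.2 (hfd d hd)
  · intro y hy hyk
    obtain ⟨d, rfl⟩ := hcoord y hy
    have hd : d ∈ convexHull ℝ S := mem_convexHull_of_forall_extremePoints_polarBody hS h0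
      fun f hf => sub_nonneg.1 ((hyk ⟨f, hf⟩).trans_eq (hh ⟨f, hf⟩ d))
    exact hconv.subset hd
  · intro y hy
    obtain ⟨d, rfl⟩ := hcoord y (subset_affineSpan ℝ (convexHull ℝ s) hy)
    simp [hh, mul_sub, hc1, hc0]
  · refine fun f => ⟨by simpa using hh f 0, fun y hy => ?_⟩
    obtain ⟨d, rfl⟩ := hcoord y hy
    have hcontact : ∀ e ∈ {e ∈ S | f.1 e = 1}, (e : E) + x ∈ {t ∈ s | h f t = 0} :=
      fun e he => ⟨he.1, (hh f e).trans (sub_eq_zero.2 he.2.symm)⟩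
    exact add_mem_affineSpan_insert
      (span_contact_eq_top_of_mem_extremePoints_polarBody hS f.2) hcontact d

end FacetPresentation

section Gorenstein

variable {N : ℕ}

theorem isExposed_zeroSet {R : Set (Fin N → ℝ)} {h : (Fin N → ℝ) →ᵃ[ℝ] ℝ}
    (hR : ∀ y ∈ R, 0 ≤ h y) : IsExposed ℝ R {y ∈ R | h y = 0} := by
  rintro ⟨z, hz, hz0⟩
  refine ⟨LinearMap.toContinuousLinearMap (-h.linear), Set.ext fun y => ?_⟩
  have hle : ∀ a b, (-h.linear) a ≤ (-h.linear) b ↔ h b ≤ h a := fun a b => by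
    simp [affineMap_apply_eq_linear_add h a, affineMap_apply_eq_linear_add h b]
  simp only [Set.mem_sep_iff, LinearMap.coe_toContinuousLinearMap', hle]
  exact and_congr_right fun hy =>
    ⟨fun h0 a ha => h0.le.trans (hR a ha),
      fun hmin => ((hmin z hz).trans_eq hz0).antisymm (hR y hy)⟩

theorem isFacet_zeroSet {R : Set (Fin N → ℝ)} {h : (Fin N → ℝ) →ᵃ[ℝ] ℝ} (hR : ∀ y ∈ R, 0 ≤ h y)
    {x : Fin N → ℝ} (hx : x ∈ affineSpan ℝ R) (hx0 : h x ≠ 0) (hne : {y ∈ R | h y = 0}.Nonempty)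
    (hspan : affineSpan ℝ R ≤ affineSpan ℝ (insert x {y ∈ R | h y = 0})) :
    IsFacet R {y ∈ R | h y = 0} := by
  set F := {y ∈ R | h y = 0}
  refine ⟨isExposed_zeroSet hR, hne, le_antisymm ?_ ?_⟩
  · refine Nat.succ_le_of_lt (Submodule.finrank_lt_finrank_of_lt (lt_of_le_of_ne
      (AffineSubspace.direction_le (affineSpan_mono ℝ (Set.sep_subset R _))) fun heq => hx0 ?_))
    obtain ⟨y, hy⟩ := hne
    have hmem : x -ᵥ y ∈ vectorSpan ℝ F := by
      rw [← direction_affineSpan, heq]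
      exact AffineSubspace.vsub_mem_direction hx (subset_affineSpan ℝ R hy.1)
    have hlin := AffineMap.linear_eqOn_vectorSpan (f := h) (g := AffineMap.const ℝ _ 0)
      (fun z hz => hz.2) hmem
    have hsub : h x - h y = 0 := by rw [← vsub_eq_sub, ← h.linearMap_vsub]; exact hlin
    rwa [hy.2, sub_zero] at hsub
  · calc polyDim R ≤ Module.finrank ℝ (vectorSpan ℝ (insert x F)) := by
          rw [← direction_affineSpan]
          exact Submodule.finrank_mono (AffineSubspace.direction_le hspan)
      _ ≤ Module.finrank ℝ (vectorSpan ℝ F) + 1 := finrank_vectorSpan_insert_le_set ..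
      _ = polyDim F + 1 := by rw [← direction_affineSpan]; rfl

theorem isIntegralOn_of_isFacet {R : Set (Fin N → ℝ)} {x : Fin N → ℝ} (hxl : IsLatticePt x)
    (hx : x ∈ affineSpan ℝ R) (hfac : ∀ F, IsFacet R F →
      ∃ U : (Fin N → ℝ) →ᵃ[ℝ] ℝ, IsIntegralOn R U ∧ ∀ f ∈ F, U f = U x + 1)
    {h : (Fin N → ℝ) →ᵃ[ℝ] ℝ} (hhx : h x = 1) (hF : IsFacet R {y ∈ R | h y = 0})
    (hspan : affineSpan ℝ R ≤ affineSpan ℝ (insert x {y ∈ R | h y = 0})) : IsIntegralOn R h := by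
  obtain ⟨U, hU, hUF⟩ := hfac _ hF
  have heq : Set.EqOn h ⇑(AffineMap.const ℝ (Fin N → ℝ) (U x + 1) - U)
      (insert x {y ∈ R | h y = 0}) := by
    rintro y (rfl | hy)
    · simp [hhx]
    · simp [hy.2, hUF y hy]
  intro y hy hyl
  obtain ⟨a, ha⟩ := hU y hy hyl
  obtain ⟨b, hb⟩ := hU x hx hxl
  refine ⟨b + 1 - a, (AffineMap.eqOn_affineSpan heq (hspan hy)).trans ?_⟩
  simp [ha, hb]

theorem IsReflexivePolytope.exists_presentation {s : Set (Fin N → ℝ)} (hs : s.Finite)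
    (href : IsReflexivePolytope (convexHull ℝ s)) (hdim : 0 < polyDim (convexHull ℝ s)) :
    ∃ x ∈ convexHull ℝ s, IsLatticePt x ∧ ∃ (Φ : Type) (_ : Fintype Φ)
      (h : Φ → (Fin N → ℝ) →ᵃ[ℝ] ℝ) (c : Φ → ℝ), IsBalancedPresentation (convexHull ℝ s) h c ∧
        ∀ k, IsIntegralOn (convexHull ℝ s) (h k) ∧ h k x = 1 ∧ ∃ t ∈ s, h k t = 0 := by
  obtain ⟨x, hx, hxl, hfac⟩ := href
  obtain ⟨Φ, hΦ, h, c, hpres, hh⟩ := exists_facet_presentation hs hx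
  have hxR : x ∈ convexHull ℝ s := intrinsicInterior_subset hx
  have hxa := subset_affineSpan ℝ _ hxR
  refine ⟨x, hxR, hxl, Φ, hΦ, h, c, hpres, fun k => ?_⟩
  obtain ⟨hkx, hk⟩ := hh k
  have hcontact : {t ∈ s | h k t = 0}.Nonempty := by
    by_contra hempty
    rw [Set.not_nonempty_iff_eq_empty.1 hempty] at hk
    have := Submodule.finrank_mono (AffineSubspace.direction_le hk)
    rw [insert_empty_eq, direction_affineSpan ℝ {x}, vectorSpan_singleton, finrank_bot] at this
    exact this.not_gt hdim
  have hsub : {t ∈ s | h k t = 0} ⊆ {y ∈ convexHull ℝ s | h k y = 0} :=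
    fun t ht => ⟨subset_convexHull ℝ s ht.1, ht.2⟩
  have hspan := hk.trans (affineSpan_mono ℝ (Set.insert_subset_insert hsub))
  have hF := isFacet_zeroSet (hpres.nonneg k) hxa (hkx ▸ one_ne_zero) (hcontact.mono hsub) hspan
  exact ⟨isIntegralOn_of_isFacet hxl hxa hfac hkx hF hspan, hkx, hcontact⟩

theorem isIntegralOn_dilate_inv {P : Set (Fin N → ℝ)} {r : ℝ} (hr : r ≠ 0)
    {h : (Fin N → ℝ) →ᵃ[ℝ] ℝ} (hh : IsIntegralOn (r • P) h) {x : Fin N → ℝ} (hx : x ∈ r • P)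
    (hxl : IsLatticePt x) {t : Fin N → ℝ} (ht : t ∈ P) (htl : IsLatticePt t) (ht0 : h (r • t) = 0) :
    IsIntegralOn P (dilate r⁻¹ h) := by
  intro y hy hyl
  have hxa := subset_affineSpan ℝ _ hx
  have hdir : y - t ∈ (affineSpan ℝ (r • P)).direction := by
    rw [← AffineSubspace.smul_span, AffineSubspace.direction_smul hr]
    exact AffineSubspace.vsub_mem_direction hy (subset_affineSpan ℝ P ht)
  obtain ⟨a, ha⟩ := hh _ (AffineSubspace.vadd_mem_of_mem_direction hdir hxa) ((hyl.sub htl).add hxl)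
  obtain ⟨b, hb⟩ := hh x hxa hxl
  refine ⟨a - b, ?_⟩
  rw [affineMap_apply_eq_linear_add, map_smul, smul_eq_mul] at ht0
  rw [affineMap_apply_eq_linear_add] at hb
  rw [vadd_eq_add, affineMap_apply_eq_linear_add, map_add, map_sub] at ha
  rw [dilate_apply]
  push_cast
  rw [← ha, ← hb]
  field_simp
  linear_combination ht0

theorem IsGorensteinOfCodeg.exists_presentation {P : Set (Fin N → ℝ)} {r : ℕ}
    (hP : IsLatticePolytope P) (hr : IsGorensteinOfCodeg P r) (hdim : 0 < polyDim P) :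
    ∃ (Φ : Type) (_ : Fintype Φ) (u : Φ → (Fin N → ℝ) →ᵃ[ℝ] ℝ) (c : Φ → ℝ),
      IsBalancedPresentation P u c ∧ (∀ k, IsIntegralOn P (u k)) ∧ (∀ k, ∃ y ∈ P, 0 < u k y) ∧
        ∑ k, c k = r := by
  obtain ⟨V, -, hVl, rfl⟩ := hP
  obtain ⟨hr0, href⟩ := hr
  have hr' : (0 : ℝ) < r := by exact_mod_cast hr0
  have hhull : (r : ℝ) • convexHull ℝ (V : Set (Fin N → ℝ)) = convexHull ℝ ((r : ℝ) • ↑V) :=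
    (convexHull_smul _ _).symm
  have hdim' : 0 < polyDim (convexHull ℝ ((r : ℝ) • (V : Set (Fin N → ℝ)))) := by
    rwa [← hhull, polyDim, ← AffineSubspace.smul_span, AffineSubspace.direction_smul hr'.ne']
  rw [hhull] at href
  obtain ⟨x, hx, hxl, Φ, hΦ, h, c, hpres, hh⟩ :=
    href.exists_presentation (V.finite_toSet.smul_set) hdim'
  have hc1 : ∑ k, c k = 1 := by simpa [(hh _).2.1] using hpres.sum_eq_one x hx
  rw [← hhull] at hx hpres hh
  have hP := hpres.smul (inv_pos.2 hr')
  rw [inv_smul_smul₀ hr'.ne'] at hP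
  refine ⟨Φ, hΦ, _, _, hP, fun k => ?_, fun k => ?_, ?_⟩
  · obtain ⟨hint, -, _, ⟨t, ht, rfl⟩, ht0⟩ := hh k
    exact isIntegralOn_dilate_inv hr'.ne' hint hx hxl (subset_convexHull ℝ _ ht) (hVl t ht) ht0
  · refine ⟨(r : ℝ)⁻¹ • x, (Set.mem_smul_set_iff_inv_smul_mem₀ hr'.ne' _ _).1 hx, ?_⟩
    rw [dilate_smul, (hh k).2.1]
    positivity
  · rw [← Finset.sum_div, hc1, one_div, inv_inv]

end Gorenstein

section CayleyJoins

section Faces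

variable {E : Type*} [AddCommGroup E] [Module ℝ E]

theorem lt_or_mem_convexHull_of_mem_convexHull {V : Set E} {ℓ : E →ᵃ[ℝ] ℝ} {m : ℝ}
    (hℓ : ∀ v ∈ V, m ≤ ℓ v) {y : E} (hy : y ∈ convexHull ℝ V) :
    m < ℓ y ∨ y ∈ convexHull ℝ {v ∈ V | ℓ v = m} := by
  set W : Set E := convexHull ℝ {v ∈ V | ℓ v = m}
  have hW : ∀ w ∈ W, ℓ w = m := fun w hw => AffineMap.eqOn_affineSpan
    (g := AffineMap.const ℝ E m) (fun v hv => hv.2) (convexHull_subset_affineSpan _ hw)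
  have hle : ∀ x : E, m < ℓ x ∨ x ∈ W → m ≤ ℓ x := fun x hx =>
    hx.elim le_of_lt fun hx => (hW x hx).ge
  have hconv : Convex ℝ {x | m < ℓ x ∨ x ∈ W} := by
    refine convex_iff_forall_pos.2 fun a ha b hb s t hs ht hst => ?_
    have hm : m = s * m + t * m := by rw [← add_mul, hst, one_mul]
    have hab : ℓ (s • a + t • b) = s * ℓ a + t * ℓ b := Convex.combo_affine_apply hst
    rcases ha with ha | haW
    · left
      rw [hab, hm]
      exact add_lt_add_of_lt_of_le (by gcongr) (by gcongr; exact hle b hb)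
    rcases hb with hb | hbW
    · left
      rw [hab, hm, hW a haW]
      gcongr
    · exact Or.inr (convex_convexHull ℝ _ haW hbW hs.le ht.le hst)
  have hV : V ⊆ {x | m < ℓ x ∨ x ∈ W} := fun v hv =>
    (hℓ v hv).lt_or_eq.imp_right fun h => subset_convexHull ℝ _ ⟨hv, h.symm⟩
  exact convexHull_min hV hconv hy

theorem convexHull_sep_eq {V : Set E} {ℓ : E →ᵃ[ℝ] ℝ} {m : ℝ}
    (hℓ : ∀ v ∈ V, m ≤ ℓ v) :
    {y ∈ convexHull ℝ V | ℓ y = m} = convexHull ℝ {v ∈ V | ℓ v = m} := by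
  refine Set.Subset.antisymm (fun y hy =>
    (lt_or_mem_convexHull_of_mem_convexHull hℓ hy.1).resolve_left hy.2.le.not_gt) fun y hy =>
    ⟨convexHull_mono (Set.sep_subset _ _) hy, ?_⟩
  exact AffineMap.eqOn_affineSpan (g := AffineMap.const ℝ E m) (fun v hv => hv.2)
    (convexHull_subset_affineSpan _ hy)

theorem exists_combo_of_mem_convexHull_union {F G : Set E} (hF : Convex ℝ F) (hG : Convex ℝ G)
    (hFne : F.Nonempty) (hGne : G.Nonempty) {z : E} (hz : z ∈ convexHull ℝ (F ∪ G)) :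
    ∃ a ∈ F, ∃ b ∈ G, ∃ s t : ℝ, 0 ≤ s ∧ 0 ≤ t ∧ s + t = 1 ∧
      ∀ f : E →ᵃ[ℝ] ℝ, f z = s * f a + t * f b := by
  rw [convexHull_union hFne hGne, hF.convexHull_eq, hG.convexHull_eq, mem_convexJoin] at hz
  obtain ⟨a, ha, b, hb, s, t, hs, ht, hst, rfl⟩ := hz
  exact ⟨a, ha, b, hb, s, t, hs, ht, hst, fun f => Convex.combo_affine_apply hst⟩

end Faces

variable {N : ℕ} {P F G : Set (Fin N → ℝ)} {ℓ : (Fin N → ℝ) →ᵃ[ℝ] ℝ}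

theorem IsLatticePolytope.nonempty (hP : IsLatticePolytope P) : P.Nonempty := by
  obtain ⟨V, hV, -, rfl⟩ := hP
  exact convexHull_nonempty_iff.2 hV

theorem IsLatticePolytope.isBounded (hP : IsLatticePolytope P) : Bornology.IsBounded P := by
  obtain ⟨V, -, -, rfl⟩ := hP
  exact isBounded_convexHull.2 V.finite_toSet.isBounded

theorem IsLatticePolytope.sep_eq (hP : IsLatticePolytope P) {m : ℝ} (hℓ : ∀ y ∈ P, m ≤ ℓ y)
    (hne : {y ∈ P | ℓ y = m}.Nonempty) : IsLatticePolytope {y ∈ P | ℓ y = m} := by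
  classical
  obtain ⟨V, -, hVl, rfl⟩ := hP
  have hface := convexHull_sep_eq fun v hv => hℓ v (subset_convexHull ℝ _ hv)
  refine ⟨V.filter (ℓ · = m), ?_, fun v hv => hVl v (Finset.mem_filter.1 hv).1, ?_⟩
  · rw [hface, convexHull_nonempty_iff] at hne
    exact hne.imp fun v hv => Finset.mem_filter.2 hv
  · rw [hface, Finset.coe_filter]
    rfl

theorem IsLatticePolytope.convexHull_union_sep_eq (hP : IsLatticePolytope P)
    (hint : IsIntegralOn P ℓ) (h0 : ∀ y ∈ P, 0 ≤ ℓ y) (h1 : ∀ y ∈ P, ℓ y ≤ 1) :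
    convexHull ℝ ({y ∈ P | ℓ y = 0} ∪ {y ∈ P | ℓ y = 1}) = P := by
  obtain ⟨V, -, hVl, rfl⟩ := hP
  refine Set.Subset.antisymm (convexHull_min (Set.union_subset (Set.sep_subset _ _)
    (Set.sep_subset _ _)) (convex_convexHull ℝ _)) (convexHull_mono fun v hv => ?_)
  have hvP := subset_convexHull ℝ (V : Set (Fin N → ℝ)) hv
  obtain ⟨n, hn⟩ := hint v (subset_affineSpan ℝ _ hvP) (hVl v hv)
  have hn0 : 0 ≤ n := by exact_mod_cast hn ▸ h0 v hvP
  have hn1 : n ≤ 1 := by exact_mod_cast hn ▸ h1 v hvP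
  obtain rfl | rfl : n = 0 ∨ n = 1 := by omega
  · exact Or.inl ⟨hvP, by simpa using hn⟩
  · exact Or.inr ⟨hvP, by simpa using hn⟩

theorem latticeIso_cayleyTwo (h0 : ∀ y ∈ F, ℓ y = 0) (h1 : ∀ y ∈ G, ℓ y = 1)
    (hint : IsIntegralOn (convexHull ℝ (F ∪ G)) ℓ) :
    LatticeIso (convexHull ℝ (F ∪ G)) (cayleyTwo F G) := by
  let f : (Fin N → ℝ) →ᵃ[ℝ] (Fin (N + 2) → ℝ) := AffineMap.pi (Fin.append
    (fun i => (LinearMap.proj i : (Fin N → ℝ) →ₗ[ℝ] ℝ).toAffineMap)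
    ![AffineMap.const ℝ _ 1 - ℓ, ℓ])
  let g : (Fin (N + 2) → ℝ) →ᵃ[ℝ] (Fin N → ℝ) :=
    (LinearMap.funLeft ℝ ℝ (Fin.castAdd 2)).toAffineMap
  have hf : ∀ y, f y = Fin.append y ![1 - ℓ y, ℓ y] := by
    intro y
    ext j
    induction j using Fin.addCases with
    | left i => simp [f]
    | right i => fin_cases i <;> simp [f]
  have hgf : Function.LeftInverse g f := fun y => funext fun i => by
    rw [hf]
    exact Fin.append_left y _ i
  have himage : f '' convexHull ℝ (F ∪ G) = cayleyTwo F G := by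
    rw [AffineMap.image_convexHull, Set.image_union, cayleyTwo]
    congr 2
    · exact Set.image_congr fun y hy => by rw [hf, h0 y hy, sub_zero]
    · exact Set.image_congr fun y hy => by rw [hf, h1 y hy, sub_self]
  refine ⟨f, g, himage, himage ▸ hgf.image_image _, fun x _ => hgf x, ?_, ?_,
    fun y _ hyl i => hyl _⟩
  · intro y hy
    rw [← himage, ← AffineSubspace.map_span] at hy
    obtain ⟨z, -, rfl⟩ := hy
    rw [hgf]
  · intro x hx hxl j
    obtain ⟨m, hm⟩ := hint x hx hxl
    rw [hf, hm]
    induction j using Fin.addCases with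
    | left i => rw [Fin.append_left]; exact hxl i
    | right i => fin_cases i; exacts [⟨1 - m, by simp⟩, ⟨m, by simp⟩]

theorem direction_le_ker_linear {m : ℝ} (hℓ : ∀ y ∈ F, ℓ y = m) :
    (affineSpan ℝ F).direction ≤ LinearMap.ker ℓ.linear := fun w hw => by
  rw [direction_affineSpan] at hw
  exact AffineMap.linear_eqOn_vectorSpan (g := AffineMap.const ℝ _ m) hℓ hw

theorem polyDim_add_polyDim_add_one (hF : F.Nonempty) (hG : G.Nonempty)
    (h0 : ∀ y ∈ F, ℓ y = 0) (h1 : ∀ y ∈ G, ℓ y = 1)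
    (hdisj : Disjoint (affineSpan ℝ F).direction (affineSpan ℝ G).direction) :
    polyDim F + polyDim G + 1 = polyDim (convexHull ℝ (F ∪ G)) := by
  obtain ⟨a, ha⟩ := hF
  obtain ⟨b, hb⟩ := hG
  have hℓab : ℓ.linear (b -ᵥ a) = 1 := by
    rw [AffineMap.linearMap_vsub, h0 a ha, h1 b hb, vsub_eq_sub, sub_zero]
  have hab : b -ᵥ a ∉ (affineSpan ℝ F).direction ⊔ (affineSpan ℝ G).direction := fun hmem => by
    have hker := sup_le (direction_le_ker_linear h0) (direction_le_ker_linear h1) hmem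
    rw [LinearMap.mem_ker, hℓab] at hker
    exact one_ne_zero hker
  have hne : b -ᵥ a ≠ 0 := fun h => hab (h ▸ Submodule.zero_mem _)
  have hFG := Submodule.finrank_sup_add_finrank_inf_eq (affineSpan ℝ F).direction
    (affineSpan ℝ G).direction
  have hline := Submodule.finrank_sup_add_finrank_inf_eq
    ((affineSpan ℝ F).direction ⊔ (affineSpan ℝ G).direction) (ℝ ∙ (b -ᵥ a))
  rw [hdisj.eq_bot, finrank_bot, add_zero] at hFG
  rw [((Submodule.disjoint_span_singleton' hne).2 hab).eq_bot, finrank_bot, add_zero, hFG,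
    finrank_span_singleton hne] at hline
  rw [polyDim, polyDim, polyDim, affineSpan_convexHull, AffineSubspace.span_union,
    AffineSubspace.direction_sup (subset_affineSpan ℝ F ha) (subset_affineSpan ℝ G hb), hline]

theorem isReducible_of_convexHull_union (hF : IsLatticePolytope F) (hG : IsLatticePolytope G)
    (hFG : convexHull ℝ (F ∪ G) = P) (hint : IsIntegralOn P ℓ) (h0 : ∀ y ∈ F, ℓ y = 0)
    (h1 : ∀ y ∈ G, ℓ y = 1)
    (hdisj : Disjoint (affineSpan ℝ F).direction (affineSpan ℝ G).direction)
    (hcodeg : polyCodeg F + polyCodeg G = polyCodeg P) : IsReducible P := by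
  subst hFG
  exact Or.inr ⟨N, F, G, hF, hG, ⟨latticeIso_cayleyTwo h0 h1 hint,
    polyDim_add_polyDim_add_one hF.nonempty hG.nonempty h0 h1 hdisj⟩, hcodeg⟩

end CayleyJoins

section SpecialSimplices

theorem exists_eq_ite_of_sum_eq_one {ι : Type*} [Fintype ι] [DecidableEq ι] {a : ι → ℝ}
    (h0 : ∀ i, 0 ≤ a i) (hint : ∀ i, ∃ n : ℤ, a i = n) (hsum : ∑ i, a i = 1) :
    ∃ j, ∀ i, a i = if j = i then 1 else 0 := by
  obtain ⟨j, -, hj⟩ := Finset.exists_lt_of_sum_lt (show ∑ _i : ι, (0 : ℝ) < ∑ i, a i by simp [hsum])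
  have hj1 : 1 ≤ a j := by
    obtain ⟨n, hn⟩ := hint j
    rw [hn] at hj ⊢
    exact_mod_cast hj
  have herase := Finset.add_sum_erase Finset.univ a (Finset.mem_univ j)
  have hrest : ∀ i ∈ Finset.univ.erase j, 0 ≤ a i := fun i _ => h0 i
  have hrest0 : ∑ i ∈ Finset.univ.erase j, a i = 0 := by
    linarith [Finset.sum_nonneg hrest]
  refine ⟨j, fun i => ?_⟩
  split_ifs with hji
  · subst hji
    linarith
  · exact (Finset.sum_eq_zero_iff_of_nonneg hrest).1 hrest0 i (by simp [Ne.symm hji])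

variable {N : ℕ} {Φ ι : Type*} {P : Set (Fin N → ℝ)}
  {u : Φ → (Fin N → ℝ) →ᵃ[ℝ] ℝ} {c : Φ → ℝ} {p : ι → Fin N → ℝ} {κ : Φ → ι}

/-- Lattice points `p i` of `P` forming a special simplex: each inequality `0 ≤ u k` of an integral
balanced presentation of `P` is strict, with value `1`, at exactly one of them, namely at
`p (κ k)`. -/
structure IsSpecialSimplex [Fintype Φ] [DecidableEq ι] (P : Set (Fin N → ℝ))
    (u : Φ → (Fin N → ℝ) →ᵃ[ℝ] ℝ) (c : Φ → ℝ) (p : ι → Fin N → ℝ) (κ : Φ → ι) : Prop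
    extends IsBalancedPresentation P u c where
  isIntegralOn : ∀ k, IsIntegralOn P (u k)
  vertex_mem : ∀ i, p i ∈ P
  isLatticePt_vertex : ∀ i, IsLatticePt (p i)
  apply_vertex : ∀ k i, u k (p i) = if κ k = i then 1 else 0

/-- The face of `P` on which every functional `u k` with `κ k ∉ J` vanishes; for a special simplex
it contains exactly the vertices `p i` with `i ∈ J`. -/
def specialFace (P : Set (Fin N → ℝ)) (u : Φ → (Fin N → ℝ) →ᵃ[ℝ] ℝ) (κ : Φ → ι) (J : Finset ι) :
    Set (Fin N → ℝ) :=
  {y ∈ P | ∀ k, κ k ∉ J → u k y = 0}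

theorem specialFace_subset (J : Finset ι) : specialFace P u κ J ⊆ P := Set.sep_subset _ _

variable [Fintype Φ] [DecidableEq ι]

theorem IsBalancedPresentation.exists_one_lt_lineMap_mem {E : Type*} [AddCommGroup E] [Module ℝ E]
    {Q : Set E} {u : Φ → E →ᵃ[ℝ] ℝ} (h : IsBalancedPresentation Q u c) {e y : E} (he : e ∈ Q)
    (hepos : ∀ k, 0 < u k e) (hy : y ∈ Q) : ∃ t > (1 : ℝ), AffineMap.lineMap y e t ∈ Q := by
  have hnear : ∀ᶠ t in nhds (1 : ℝ), ∀ k, 0 < u k (AffineMap.lineMap y e t) := by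
    refine Filter.eventually_all.2 fun k => ?_
    simp only [AffineMap.apply_lineMap]
    exact AffineMap.lineMap_continuous.continuousAt.eventually_const_lt (by simpa using hepos k)
  obtain ⟨t, ht, ht1⟩ :=
    ((hnear.filter_mono nhdsWithin_le_nhds).and (self_mem_nhdsWithin (s := Set.Ioi 1))).exists
  exact ⟨t, ht1, h.mem_of_nonneg _ (AffineMap.lineMap_mem t (subset_affineSpan ℝ Q hy)
    (subset_affineSpan ℝ Q he)) fun k => (ht k).le⟩

theorem IsBalancedPresentation.eq_zero_of_forall_linear_eq_zero {E : Type*}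
    [NormedAddCommGroup E] [NormedSpace ℝ E] {Q : Set E} {u : Φ → E →ᵃ[ℝ] ℝ}
    (h : IsBalancedPresentation Q u c) (hbdd : Bornology.IsBounded Q) (hne : Q.Nonempty) {w : E}
    (hw : w ∈ (affineSpan ℝ Q).direction) (hw0 : ∀ k, (u k).linear w = 0) : w = 0 := by
  obtain ⟨y, hy⟩ := hne
  have hline : ∀ t : ℝ, t • w + y ∈ Q := fun t => by
    refine h.mem_of_nonneg _ (AffineSubspace.vadd_mem_of_mem_direction
      (Submodule.smul_mem _ t hw) (subset_affineSpan ℝ Q hy)) fun k => ?_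
    have hk : u k (t • w + y) = u k y := by
      rw [← vadd_eq_add, AffineMap.map_vadd, map_smul, hw0, smul_zero, zero_vadd]
    exact hk ▸ h.nonneg k y hy
  obtain ⟨C, hC⟩ := hbdd.exists_norm_le
  by_contra hw_ne
  obtain ⟨n, hn⟩ := exists_lt_nsmul (norm_pos_iff.2 hw_ne) (C + C)
  refine hn.not_ge ?_
  calc n • ‖w‖ = ‖((n : ℝ) • w + y) - y‖ := by simp [norm_smul]
    _ ≤ ‖(n : ℝ) • w + y‖ + ‖y‖ := norm_sub_le _ _
    _ ≤ C + C := add_le_add (hC _ (hline n)) (hC y hy)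

theorem IsSpecialSimplex.vertex_mem_specialFace (h : IsSpecialSimplex P u c p κ) {J : Finset ι}
    {i : ι} (hi : i ∈ J) : p i ∈ specialFace P u κ J :=
  ⟨h.vertex_mem i, fun k hk =>
    (h.apply_vertex k i).trans (if_neg (ne_of_mem_of_not_mem hi hk).symm)⟩

theorem IsBalancedPresentation.exists_isSpecialSimplex [Fintype ι] [Nonempty ι]
    (h : IsBalancedPresentation P u c) (hint : ∀ k, IsIntegralOn P (u k))
    (hpos : ∀ k, ∃ y ∈ P, 0 < u k y) (hc : ∑ k, c k = Fintype.card ι) (hp : ∀ i, p i ∈ P)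
    (hpl : ∀ i, IsLatticePt (p i))
    (hsum : ∑ i, p i ∈ intrinsicInterior ℝ ((Fintype.card ι : ℝ) • P)) :
    ∃ κ : Φ → ι, IsSpecialSimplex P u c p κ := by
  have hone : ∀ k, 1 ≤ ∑ i, u k (p i) := fun k => by
    rw [← dilate_card_sum]
    exact h.one_le_dilate_of_mem_intrinsicInterior hint hpos (hp (Classical.arbitrary ι)) (hpl _)
      Fintype.card_pos hsum (IsLatticePt.sum hpl) k
  have hweighted : ∑ k, c k * ∑ i, u k (p i) = ∑ k, c k := by
    simp only [Finset.mul_sum]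
    rw [Finset.sum_comm, hc]
    simp [h.sum_eq_one _ (hp _)]
  have hle : ∀ k ∈ Finset.univ, c k ≤ c k * ∑ i, u k (p i) := fun k _ =>
    le_mul_of_one_le_right (h.weight_pos k).le (hone k)
  have heq : ∀ k, ∑ i, u k (p i) = 1 := fun k => by
    have hk := (Finset.sum_eq_sum_iff_of_le hle).1 hweighted.symm k (Finset.mem_univ k)
    exact (mul_eq_left₀ (h.weight_pos k).ne').1 hk.symm
  choose κ hκ using fun k => exists_eq_ite_of_sum_eq_one (fun i => h.nonneg k _ (hp i))
    (fun i => hint k _ (subset_affineSpan ℝ P (hp i)) (hpl i)) (heq k)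
  exact ⟨κ, h, hint, hp, hpl, hκ⟩

namespace IsSpecialSimplex

theorem polyCodeg_eq_card [Fintype ι] (h : IsSpecialSimplex P u c p κ) [Nonempty ι] :
    polyCodeg P = Fintype.card ι :=
  h.toIsBalancedPresentation.polyCodeg_eq_card h.isIntegralOn h.vertex_mem h.isLatticePt_vertex
    (by simp [h.apply_vertex])

theorem isBalancedPresentation_specialFace (h : IsSpecialSimplex P u c p κ) (J : Finset ι) :
    IsBalancedPresentation (specialFace P u κ J) (fun k : {k | κ k ∈ J} => u k)
      (fun k : {k | κ k ∈ J} => c k) :=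
  h.face {k | κ k ∈ J}

theorem polyCodeg_specialFace (h : IsSpecialSimplex P u c p κ) {J : Finset ι}
    (hJ : J.Nonempty) : polyCodeg (specialFace P u κ J) = J.card := by
  have : Nonempty J := hJ.to_subtype
  rw [(h.isBalancedPresentation_specialFace J).polyCodeg_eq_card
    (fun k => (h.isIntegralOn k).mono (specialFace_subset J)) (p := fun i : J => p i)
    (fun i => h.vertex_mem_specialFace i.2)
    (fun i => h.isLatticePt_vertex i) ?_, Fintype.card_coe]
  rintro ⟨k, hk⟩
  simp only [h.apply_vertex]
  exact (Finset.sum_eq_single ⟨κ k, hk⟩ (fun i _ hi => if_neg fun hki => hi (Subtype.ext hki.symm))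
    (by simp)).trans (if_pos rfl)

theorem disjoint_direction_specialFace [Fintype ι] (h : IsSpecialSimplex P u c p κ)
    (hbdd : Bornology.IsBounded P) (hne : P.Nonempty) (J : Finset ι) :
    Disjoint (affineSpan ℝ (specialFace P u κ J)).direction
      (affineSpan ℝ (specialFace P u κ Jᶜ)).direction := by
  refine Submodule.disjoint_def.2 fun w hw hw' => h.eq_zero_of_forall_linear_eq_zero hbdd hne
    (AffineSubspace.direction_le (affineSpan_mono ℝ (specialFace_subset J)) hw) fun k => ?_
  by_cases hk : κ k ∈ J
  · exact direction_le_ker_linear (fun y hy => hy.2 k (by simpa using hk)) hw'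
  · exact direction_le_ker_linear (fun y hy => hy.2 k hk) hw

theorem sum_weight_filter_mem (h : IsSpecialSimplex P u c p κ) (I : Finset ι) :
    ∑ k with κ k ∈ I, c k = I.card :=
  calc ∑ k with κ k ∈ I, c k = ∑ k, c k * ∑ i ∈ I, u k (p i) := by
        simp [h.apply_vertex, Finset.sum_filter]
    _ = ∑ i ∈ I, ∑ k, c k * u k (p i) := by simp only [Finset.mul_sum, Finset.sum_comm (t := I)]
    _ = I.card := by simp [h.sum_eq_one _ (h.vertex_mem _)]

theorem eq_zero_of_sum_weight_mul_eq (h : IsSpecialSimplex P u c p κ) {I : Finset ι} {q : Φ → ℝ}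
    {m : ℝ} (hq : 0 ≤ q) (hqI : ∀ k, κ k ∈ I → q k = m) (hsum : ∑ k, c k * q k = I.card * m)
    {k : Φ} (hk : κ k ∉ I) : q k = 0 := by
  have hin : ∑ k with κ k ∈ I, c k * q k = I.card * m := by
    rw [← h.sum_weight_filter_mem, Finset.sum_mul]
    exact Finset.sum_congr rfl fun k hk => by rw [hqI k (Finset.mem_filter.1 hk).2]
  have hout : ∑ k with κ k ∉ I, c k * q k = 0 := by
    linarith [Finset.sum_filter_add_sum_filter_not Finset.univ (κ · ∈ I) fun k => c k * q k]
  rw [Finset.sum_eq_zero_iff_of_nonneg fun k _ => mul_nonneg (h.weight_pos k).le (hq k)] at hout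
  exact (mul_eq_zero.1 (hout k (by simp [hk]))).resolve_left (h.weight_pos k).ne'

theorem exists_finset_weights [Fintype ι] (h : IsSpecialSimplex P u c p κ)
    (hdim : polyDim P + 3 ≤ 2 * Fintype.card ι) :
    ∃ (I : Finset ι) (c' : Φ → ℝ), I.Nonempty ∧ Iᶜ.Nonempty ∧ 0 ≤ c' ∧
      (∀ k, κ k ∉ I → c' k = 0 ∨ c' k = 1) ∧ (∀ y ∈ P, ∑ k, c' k * u k y = 1) ∧
      ∀ y ∈ P, (∀ k, κ k ∈ I → c' k * u k y = 0) → y ∈ specialFace P u κ Iᶜ := by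
  have : Nonempty ι := Fintype.card_pos_iff.1 (by omega)
  set y₀ := p (Classical.arbitrary ι)
  have hy₀ : y₀ ∈ P := h.vertex_mem _
  -- The functionals `u k`, linearized as functionals on `D × ℝ` with the affine hull of `P` at
  -- height `1`.
  let D := (affineSpan ℝ P).direction
  let g : Φ → Module.Dual ℝ (D × ℝ) := fun k =>
    ((u k).linear.comp D.subtype).coprod (LinearMap.toSpanSingleton ℝ ℝ (u k y₀))
  have hlift : ∀ y ∈ P, ∃ x : D × ℝ, ∀ k, g k x = u k y := fun y hy => by
    refine ⟨(⟨y -ᵥ y₀, AffineSubspace.vsub_mem_direction (subset_affineSpan ℝ P hy)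
      (subset_affineSpan ℝ P hy₀)⟩, 1), fun k => ?_⟩
    change (u k).linear (y -ᵥ y₀) + (1 : ℝ) • u k y₀ = u k y
    rw [AffineMap.linearMap_vsub, vsub_eq_sub, one_smul, sub_add_cancel]
  choose! x hx using hlift
  have heval : ∀ y ∈ P, ∀ b : Φ → ℝ, (∑ k, b k • g k) (x y) = ∑ k, b k * u k y := fun y hy b => by
    simp [LinearMap.sum_apply, hx y hy]
  have hfinrank : Module.finrank ℝ (Module.Dual ℝ (D × ℝ)) = polyDim P + 1 := by
    rw [Subspace.dual_finrank_eq, Module.finrank_prod, Module.finrank_self, polyDim]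
  obtain ⟨I, c', hI, hIc, hc', h01, hsum, hface⟩ :=
    exists_finset_forall_dual_apply_eq_zero_of_indicators (g := g) (κ := κ)
      (e := fun i => Module.Dual.eval ℝ _ (x (p i)))
      (fun i k => (hx _ (h.vertex_mem i) k).trans (h.apply_vertex k i)) h.weight_pos
      (fun i => (heval _ (h.vertex_mem i) c).trans (h.sum_eq_one _ (h.vertex_mem i)))
      (by omega)
  refine ⟨I, c', hI, hIc, hc', h01, fun y hy => ?_, fun y hy hyI => ⟨hy, fun k hk => ?_⟩⟩
  · rw [← heval y hy, hsum, heval y hy, h.sum_eq_one y hy]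
  · rw [← hx y hy]
    refine hface (Module.Dual.eval ℝ _ (x y)) (fun k => ?_) (fun k hk => ?_) k (by simpa using hk)
    · exact (h.nonneg k y hy).trans_eq (hx y hy k).symm
    · exact (congrArg _ (hx y hy k)).trans (hyI k hk)

theorem exists_affineMap_specialFace [Fintype ι] (h : IsSpecialSimplex P u c p κ)
    (hdim : polyDim P + 3 ≤ 2 * Fintype.card ι) :
    ∃ (I : Finset ι) (ℓ : (Fin N → ℝ) →ᵃ[ℝ] ℝ), I.Nonempty ∧ Iᶜ.Nonempty ∧ IsIntegralOn P ℓ ∧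
      (∀ y ∈ P, 0 ≤ ℓ y) ∧ (∀ y ∈ P, ℓ y ≤ 1) ∧ (∀ y ∈ specialFace P u κ I, ℓ y = 0) ∧
      {y ∈ P | ℓ y = 1} = specialFace P u κ Iᶜ := by
  obtain ⟨I, c', hI, hIc, hc', h01, hsum, hface⟩ := h.exists_finset_weights hdim
  let ℓ : (Fin N → ℝ) →ᵃ[ℝ] ℝ :=
    (Fintype.linearCombination ℝ fun k => if κ k ∈ I then 0 else c' k).toAffineMap.comp
      (AffineMap.pi u)
  have hℓ : ∀ y, ℓ y = ∑ k with κ k ∉ I, c' k * u k y := fun y => by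
    simp [ℓ, Fintype.linearCombination_apply, Finset.sum_filter, mul_comm, ite_not]
  have hterm : ∀ y ∈ P, ∀ k, 0 ≤ c' k * u k y := fun y hy k => mul_nonneg (hc' k) (h.nonneg k y hy)
  have hadd : ∀ y ∈ P, ∑ k with κ k ∈ I, c' k * u k y + ℓ y = 1 := fun y hy => by
    rw [hℓ, Finset.sum_filter_add_sum_filter_not, hsum y hy]
  have hcompl : ∀ y ∈ P, 0 ≤ ∑ k with κ k ∈ I, c' k * u k y := fun y hy =>
    Finset.sum_nonneg fun k _ => hterm y hy k
  refine ⟨I, ℓ, hI, hIc, ?_, ?_, ?_, ?_, ?_⟩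
  · refine isIntegralOn_of_forall_apply_eq_sum (fun k _ => h.isIntegralOn k) (fun k hk => ?_) hℓ
    rcases h01 k (Finset.mem_filter.1 hk).2 with hk | hk
    · exact ⟨0, by simp [hk]⟩
    · exact ⟨1, by simp [hk]⟩
  · intro y hy
    rw [hℓ]
    exact Finset.sum_nonneg fun k _ => hterm y hy k
  · intro y hy
    linarith [hadd y hy, hcompl y hy]
  · intro y hy
    rw [hℓ]
    exact Finset.sum_eq_zero fun k hk => by rw [hy.2 k (Finset.mem_filter.1 hk).2, mul_zero]
  · refine Set.Subset.antisymm (fun y hy => ?_) fun y hy => ⟨hy.1, ?_⟩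
    · have h0 : ∑ k with κ k ∈ I, c' k * u k y = 0 := by linarith [hadd y hy.1, hy.2]
      rw [Finset.sum_eq_zero_iff_of_nonneg fun k _ => hterm y hy.1 k] at h0
      exact hface y hy.1 fun k hk => h0 k (by simp [hk])
    · have h0 : ∑ k with κ k ∈ I, c' k * u k y = 0 := Finset.sum_eq_zero fun k hk => by
        rw [hy.2 k (by simpa using hk), mul_zero]
      linarith [hadd y hy.1]

theorem sum_apply_vertex_of_specialFace [Fintype ι] (h : IsSpecialSimplex P u c p κ)
    {I : Finset ι} {ℓ : (Fin N → ℝ) →ᵃ[ℝ] ℝ} (h0 : ∀ y ∈ specialFace P u κ I, ℓ y = 0)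
    (h1 : ∀ y ∈ specialFace P u κ Iᶜ, ℓ y = 1) : ∑ i, ℓ (p i) = Fintype.card ι - I.card := by
  have hℓp : ∀ i, ℓ (p i) = 1 - if i ∈ I then 1 else 0 := fun i => by
    split_ifs with hi
    · rw [h0 _ (h.vertex_mem_specialFace hi), sub_self]
    · rw [h1 _ (h.vertex_mem_specialFace (Finset.mem_compl.2 hi)), sub_zero]
  simp [hℓp]

theorem exists_forall_sub_one_mul_add_mul_eq [Fintype ι] (h : IsSpecialSimplex P u c p κ)
    {I : Finset ι} (hI : I.Nonempty) (hIc : Iᶜ.Nonempty) {ℓ : (Fin N → ℝ) →ᵃ[ℝ] ℝ}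
    (h0 : ∀ y ∈ specialFace P u κ I, ℓ y = 0) (h1 : ∀ y ∈ specialFace P u κ Iᶜ, ℓ y = 1)
    (hP : convexHull ℝ ({y ∈ P | ℓ y = 0} ∪ specialFace P u κ Iᶜ) = P) {y : Fin N → ℝ}
    (hy : y ∈ P) (hy0 : ℓ y = 0) :
    ∃ t > (1 : ℝ), ∃ s ≥ (0 : ℝ), ∃ a ∈ P, t - 1 + s = I.card * (t / Fintype.card ι) ∧
      ∀ k, κ k ∈ I → (t - 1) * u k y + s * u k a = t / Fintype.card ι := by
  obtain ⟨i, hi⟩ := hI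
  obtain ⟨j, hj⟩ := hIc
  have : Nonempty ι := ⟨i⟩
  have hr : (0 : ℝ) < Fintype.card ι := by exact_mod_cast Fintype.card_pos
  -- Push the line from `y` through the barycenter `e` of the special simplex slightly beyond `e`,
  -- and split the resulting point of `P` into its parts at `ℓ = 0` and `ℓ = 1`.
  obtain ⟨e, heP, he⟩ := exists_mem_forall_card_mul_apply_eq_sum h.convex h.vertex_mem
  have hue : ∀ k, u k e = 1 / Fintype.card ι := fun k => by
    rw [eq_div_iff hr.ne', mul_comm, he]
    simp [h.apply_vertex]
  have hℓe : ℓ e = 1 - I.card / Fintype.card ι := by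
    rw [← mul_right_inj' hr.ne', he, h.sum_apply_vertex_of_specialFace h0 h1]
    field_simp
  obtain ⟨t, ht, htP⟩ := h.exists_one_lt_lineMap_mem heP (fun k => by rw [hue]; positivity) hy
  obtain ⟨a, ha, b, hb, s, s', hs, -, hss, hz⟩ := exists_combo_of_mem_convexHull_union
    (h.convex.inter ((convex_singleton 0).affine_preimage ℓ))
    (h.isBalancedPresentation_specialFace Iᶜ).convex
    ⟨p i, h.vertex_mem i, h0 _ (h.vertex_mem_specialFace hi)⟩
    ⟨p j, h.vertex_mem_specialFace hj⟩ (hP.symm ▸ htP)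
  simp only [AffineMap.apply_lineMap] at hz
  simp only [AffineMap.lineMap_apply_module, smul_eq_mul] at hz
  have ha0 : ℓ a = 0 := ha.2
  refine ⟨t, ht, s, hs, a, ha.1, ?_, fun k hk => ?_⟩
  · have hzℓ := hz ℓ
    rw [hy0, ha0, h1 b hb, hℓe] at hzℓ
    linear_combination hss + hzℓ
  · have hzk := hz (u k)
    rw [hb.2 k (by simpa using hk), hue] at hzk
    linear_combination -hzk

theorem sep_eq_zero_eq_specialFace [Fintype ι] (h : IsSpecialSimplex P u c p κ) {I : Finset ι}
    (hI : I.Nonempty) (hIc : Iᶜ.Nonempty) {ℓ : (Fin N → ℝ) →ᵃ[ℝ] ℝ}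
    (h0 : ∀ y ∈ specialFace P u κ I, ℓ y = 0) (h1 : ∀ y ∈ specialFace P u κ Iᶜ, ℓ y = 1)
    (hP : convexHull ℝ ({y ∈ P | ℓ y = 0} ∪ specialFace P u κ Iᶜ) = P) :
    {y ∈ P | ℓ y = 0} = specialFace P u κ I := by
  refine Set.Subset.antisymm (fun y hy => ⟨hy.1, fun k hk => ?_⟩) fun y hy => ⟨hy.1, h0 y hy⟩
  obtain ⟨t, ht, s, hs, a, ha, hcard, heq⟩ :=
    h.exists_forall_sub_one_mul_add_mul_eq hI hIc h0 h1 hP hy.1 hy.2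
  have hfst : ∀ k, 0 ≤ (t - 1) * u k y := fun k =>
    mul_nonneg (sub_pos.2 ht).le (h.nonneg k y hy.1)
  have hsnd : ∀ k, 0 ≤ s * u k a := fun k => mul_nonneg hs (h.nonneg k a ha)
  have hsum : ∑ k, c k * ((t - 1) * u k y + s * u k a) = I.card * (t / Fintype.card ι) :=
    calc ∑ k, c k * ((t - 1) * u k y + s * u k a)
        = (t - 1) * ∑ k, c k * u k y + s * ∑ k, c k * u k a := by
          simp only [mul_add, Finset.sum_add_distrib, Finset.mul_sum, mul_left_comm]
      _ = I.card * (t / Fintype.card ι) := by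
          rw [h.sum_eq_one y hy.1, h.sum_eq_one a ha, mul_one, mul_one, hcard]
  have hzero := h.eq_zero_of_sum_weight_mul_eq (fun k => add_nonneg (hfst k) (hsnd k)) heq hsum hk
  exact (mul_eq_zero.1 ((add_eq_zero_iff_of_nonneg (hfst k) (hsnd k)).1 hzero).1).resolve_left
    (sub_pos.2 ht).ne'

theorem isReducible [Fintype ι] (h : IsSpecialSimplex P u c p κ) (hP : IsLatticePolytope P)
    (hdim : polyDim P + 3 ≤ 2 * Fintype.card ι) : IsReducible P := by
  obtain ⟨I, ℓ, hI, hIc, hint, hnonneg, hle, h0, h1⟩ := h.exists_affineMap_specialFace hdim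
  have ⟨i, hi⟩ := hI
  have ⟨j, hj⟩ := hIc
  have hℓ1 : ∀ y ∈ specialFace P u κ Iᶜ, ℓ y = 1 := fun y hy => (h1.symm.subset hy).2
  have hunion := hP.convexHull_union_sep_eq hint hnonneg hle
  rw [h1] at hunion
  have hI0 := h.sep_eq_zero_eq_specialFace hI hIc h0 hℓ1 hunion
  have hF : IsLatticePolytope (specialFace P u κ I) :=
    hI0 ▸ hP.sep_eq hnonneg (hI0 ▸ ⟨p i, h.vertex_mem_specialFace hi⟩)
  have hG : IsLatticePolytope (specialFace P u κ Iᶜ) := by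
    have hneg : {y ∈ P | (-ℓ) y = -1} = specialFace P u κ Iᶜ := by simp [← h1]
    exact hneg ▸ hP.sep_eq (fun y hy => neg_le_neg (hle y hy))
      (hneg ▸ ⟨p j, h.vertex_mem_specialFace hj⟩)
  have : Nonempty ι := ⟨i⟩
  refine isReducible_of_convexHull_union hF hG (hI0 ▸ hunion) hint h0 hℓ1
    (h.disjoint_direction_specialFace hP.isBounded hP.nonempty I) ?_
  rw [h.polyCodeg_specialFace hI, h.polyCodeg_specialFace hIc, h.polyCodeg_eq_card,
    Finset.card_add_card_compl]

end IsSpecialSimplex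

end SpecialSimplices

section IDP

variable {N : ℕ} {P : Set (Fin N → ℝ)}

theorem IsIDP.exists_sum_eq_of_isLatticePt (hP : IsIDP P) {r : ℕ} (hr : 0 < r) {x : Fin N → ℝ}
    (hx : IsLatticePt x) (hxP : x ∈ (r : ℝ) • P) :
    ∃ p : Fin r → Fin N → ℝ, (∀ i, p i ∈ P ∧ IsLatticePt (p i)) ∧ x = ∑ i, p i := by
  obtain rfl | hr2 := (Nat.succ_le_iff.2 hr).eq_or_lt
  · exact ⟨fun _ => x, fun _ => ⟨by simpa using hxP, hx⟩, by simp⟩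
  · exact hP r hr2 x hx hxP

theorem IsIDP.exists_sum_mem_intrinsicInterior (hP : IsIDP P) (hGor : IsGorenstein P) :
    ∃ r, IsGorensteinOfCodeg P r ∧ ∃ p : Fin r → Fin N → ℝ,
      (∀ i, p i ∈ P ∧ IsLatticePt (p i)) ∧ ∑ i, p i ∈ intrinsicInterior ℝ ((r : ℝ) • P) := by
  obtain ⟨r, hr, href⟩ := hGor
  have ⟨x, hx, hxl, _⟩ := href
  obtain ⟨p, hp, rfl⟩ := hP.exists_sum_eq_of_isLatticePt hr hxl (intrinsicInterior_subset hx)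
  exact ⟨r, ⟨hr, href⟩, p, hp, hx⟩

end IDP

theorem stmt4_general {N r : ℕ} {P : Set (Fin N → ℝ)} (hP : IsLatticePolytope P)
    (hr : IsGorensteinOfCodeg P r) {p : Fin r → Fin N → ℝ}
    (hp : ∀ i, p i ∈ P ∧ IsLatticePt (p i))
    (hsum : ∑ i, p i ∈ intrinsicInterior ℝ ((r : ℝ) • P)) (h : 2 * polyDeg P < polyDim P) :
    IsReducible P := by
  obtain ⟨Φ, _, u, c, hbal, hint, hpos, hc⟩ := hr.exists_presentation hP (by omega)
  have : Nonempty (Fin r) := ⟨0, hr.1⟩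
  obtain ⟨κ, hsimplex⟩ := hbal.exists_isSpecialSimplex hint hpos (by simpa using hc)
    (fun i => (hp i).1) (fun i => (hp i).2) (by simpa using hsum)
  have hcodeg : polyCodeg P = r := by simpa using hsimplex.polyCodeg_eq_card
  have hdim : polyDim P + 3 ≤ 2 * r := by
    rw [polyDeg, hcodeg] at h
    omega
  exact hsimplex.isReducible hP (by rwa [Fintype.card_fin])

/-- An IDP Gorenstein polytope of dimension `d` and degree `s` with `d > 2s` is reducible. -/
theorem stmt4 {N d s : ℕ} (P : Set (Fin N → ℝ))
    (hP : IsLatticePolytope P) (hGor : IsGorenstein P) (hIDP : IsIDP P)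
    (hd : polyDim P = d) (hs : polyDeg P = s) (h : 2 * s < d) :
    IsReducible P := by
  obtain ⟨r, hr, p, hp, hsum⟩ := hIDP.exists_sum_mem_intrinsicInterior hGor
  exact stmt4_general hP hr hp hsum (hs ▸ hd ▸ h)
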